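/- arXiv:1611.06756 — 11 statements merged into one kernel-verified Lean document; each statement's English description precedes it below -/
import Mathlib

section
/- For every nonzero vector v in V, the number of 2-dimensional totally isotropic subspaces of V containing v is exactly p+1. -/
/-!
If a plane `L` contains `v ≠ 0`, then `L` is spanned by `v` and one further vector `w`, so `L` is
totally isotropic for an alternating form `B` exactly when `B v w = 0`, that is, when `L` lies in
the hyperplane `v^⊥ = ker (B v)`. The totally isotropic planes through `v` therefore correspond to
the points of the projective space of `v^⊥ / ⟨v⟩`, whose dimension as a vector space is
`dim V - 2`.
-/

open Module
open scoped LinearAlgebra.Projectivization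

section Pencils

variable {K V : Type*} [DivisionRing K] [AddCommGroup V] [Module K V]

theorem finrank_comap_mkQ [FiniteDimensional K V] (N : Submodule K V) (H : Submodule K (V ⧸ N)) :
    finrank K (H.comap N.mkQ) = finrank K H + finrank K N := by
  have hmap : (H.comap N.mkQ).map N.mkQ = H :=
    Submodule.map_comap_eq_of_surjective N.mkQ_surjective H
  have hle : N ≤ H.comap N.mkQ := Submodule.le_comap_mkQ N H
  have hker : finrank K (LinearMap.ker (N.mkQ.domRestrict (H.comap N.mkQ))) = finrank K N := by
    rw [LinearMap.ker_domRestrict, Submodule.ker_mkQ]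
    exact (Submodule.comapSubtypeEquivOfLe hle).finrank_eq
  rw [← (N.mkQ.domRestrict (H.comap N.mkQ)).finrank_range_add_finrank_ker, hker,
    LinearMap.range_domRestrict, hmap]

/-- The points of `ℙ K (V ⧸ N)` as the subspaces of `V` that contain `N` with codimension one. -/
noncomputable def projectivizationQuotientEquiv [FiniteDimensional K V] (N : Submodule K V) :
    ℙ K (V ⧸ N) ≃ {L : Submodule K V // N ≤ L ∧ finrank K L = finrank K N + 1} :=
  (Projectivization.equivSubmodule K (V ⧸ N)).trans <|
    ((Submodule.comapMkQRelIso N).toEquiv.subtypeEquiv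
      (q := fun L : Set.Ici N ↦ finrank K (L : Submodule K V) = finrank K N + 1) fun H ↦ by
        change _ ↔ finrank K (H.comap N.mkQ) = _
        rw [finrank_comap_mkQ, add_comm, Nat.add_left_cancel_iff]).trans <|
    Equiv.subtypeSubtypeEquivSubtypeInter (· ∈ Set.Ici N) fun L ↦ finrank K L = finrank K N + 1

/-- The planes through the nonzero vector `v` as the points of `ℙ K (V ⧸ ⟨v⟩)`. -/
noncomputable def planesThroughEquiv [FiniteDimensional K V] {v : V} (hv : v ≠ 0) :
    {L : Submodule K V // v ∈ L ∧ finrank K L = 2} ≃ ℙ K (V ⧸ K ∙ v) :=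
  (Equiv.subtypeEquivRight fun L ↦ by
    rw [Submodule.span_singleton_le_iff_mem, finrank_span_singleton hv]).trans
    (projectivizationQuotientEquiv (K ∙ v)).symm

/-- The planes of `V` through `v` that lie in the subspace `W`, as the planes of the space
`W` through `v`. -/
def planesThroughLEEquiv {W : Submodule K V} (v : W) :
    {L : Submodule K V // L ≤ W ∧ (v : V) ∈ L ∧ finrank K L = 2} ≃
      {L : Submodule K W // v ∈ L ∧ finrank K L = 2} :=
  (Equiv.subtypeSubtypeEquivSubtypeInter (· ≤ W)
    fun L ↦ (v : V) ∈ L ∧ finrank K L = 2).symm.trans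
    ((Submodule.MapSubtype.orderIso W).toEquiv.subtypeEquiv fun L ↦ by
      change _ ↔ (v : V) ∈ L.map W.subtype ∧ finrank K (L.map W.subtype) = 2
      simp).symm

theorem exists_span_pair_eq_of_finrank_eq_two {L : Submodule K V} (hL : finrank K L = 2) {v : V}
    (hv : v ≠ 0) (hvL : v ∈ L) : ∃ w, Submodule.span K {v, w} = L := by
  have hv' : (⟨v, hvL⟩ : L) ≠ 0 := Subtype.coe_ne_coe.1 hv
  obtain ⟨w, hvw⟩ := exists_linearIndependent_pair_of_one_lt_finrank (R := K) (by lia) hv'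
  have hspan := hvw.span_eq_top_of_card_eq_finrank (by simp [hL])
  rw [Matrix.range_cons_cons_empty] at hspan
  refine ⟨w, ?_⟩
  simpa [Submodule.map_span, Set.image_pair] using congrArg (Submodule.map L.subtype) hspan

end Pencils

section AlternatingForms

theorem isotropic_span_pair_iff {R M M' : Type*} [CommRing R] [AddCommGroup M] [Module R M]
    [AddCommGroup M'] [Module R M'] {B : M →ₗ[R] M →ₗ[R] M'} (hB : B.IsAlt) (v w : M) :
    (∀ x ∈ Submodule.span R {v, w}, ∀ y ∈ Submodule.span R {v, w}, B x y = 0) ↔ B v w = 0 := by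
  refine ⟨fun h ↦ h v (Submodule.mem_span_of_mem (by simp)) w
    (Submodule.mem_span_of_mem (by simp)), fun hvw x hx y hy ↦ ?_⟩
  have hwv : B w v = 0 := hB.eq_iff.1 hvw
  obtain ⟨a, b, rfl⟩ := Submodule.mem_span_pair.1 hx
  obtain ⟨c, d, rfl⟩ := Submodule.mem_span_pair.1 hy
  simp [hB.self_eq_zero, hvw, hwv]

variable {K V : Type*} [Field K] [AddCommGroup V] [Module K V]

theorem isotropic_iff_le_ker_of_finrank_eq_two {M : Type*} [AddCommGroup M] [Module K M]
    {B : V →ₗ[K] V →ₗ[K] M} (hB : B.IsAlt) {L : Submodule K V} (hL : finrank K L = 2) {v : V}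
    (hv : v ≠ 0) (hvL : v ∈ L) :
    (∀ x ∈ L, ∀ y ∈ L, B x y = 0) ↔ L ≤ LinearMap.ker (B v) := by
  obtain ⟨w, rfl⟩ := exists_span_pair_eq_of_finrank_eq_two hL hv hvL
  rw [isotropic_span_pair_iff hB, Submodule.span_le]
  simp [Set.insert_subset_iff, hB.self_eq_zero]

/-- The totally isotropic planes through `v` as the points of the projective space of
`v^⊥ / ⟨v⟩`. -/
noncomputable def isotropicPlanesThroughEquiv {M : Type*} [AddCommGroup M] [Module K M]
    [FiniteDimensional K V] {B : V →ₗ[K] V →ₗ[K] M} (hB : B.IsAlt) {v : V} (hv : v ≠ 0) :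
    {L : Submodule K V // v ∈ L ∧ finrank K L = 2 ∧ ∀ x ∈ L, ∀ y ∈ L, B x y = 0} ≃
      ℙ K (LinearMap.ker (B v) ⧸ K ∙ (⟨v, hB v⟩ : LinearMap.ker (B v))) :=
  (Equiv.subtypeEquivRight fun L ↦ by
    rw [← and_assoc, and_comm]
    exact and_congr_left fun ⟨hvL, hL⟩ ↦
      isotropic_iff_le_ker_of_finrank_eq_two hB hL hv hvL).trans <|
    (planesThroughLEEquiv ⟨v, hB v⟩).trans (planesThroughEquiv (Subtype.coe_ne_coe.1 hv))

theorem finrank_ker_quotient_span_singleton [FiniteDimensional K V] {f : Dual K V} (hf : f ≠ 0)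
    {v : LinearMap.ker f} (hv : v ≠ 0) :
    finrank K (LinearMap.ker f ⧸ K ∙ v) + 2 = finrank K V := by
  rw [← Module.Dual.finrank_ker_add_one_of_ne_zero hf,
    ← (K ∙ v).finrank_quotient_add_finrank, finrank_span_singleton hv]

end AlternatingForms

theorem stmt_1_general {K V : Type*} [Field K] [Finite K] [AddCommGroup V] [Module K V] {n : ℕ}
    (hV : finrank K V = n + 2) {B : V →ₗ[K] V →ₗ[K] K} (hB : B.IsAlt) {v : V} (hv : B v ≠ 0) :
    Nat.card {L : Submodule K V // v ∈ L ∧ finrank K L = 2 ∧ ∀ x ∈ L, ∀ y ∈ L, B x y = 0} =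
      ∑ i ∈ Finset.range n, Nat.card K ^ i := by
  have : FiniteDimensional K V := .of_finrank_pos (by lia)
  have hv₀ : v ≠ 0 := fun h ↦ hv (by rw [h, map_zero])
  have hdim := finrank_ker_quotient_span_singleton hv (v := ⟨v, hB v⟩)
    (Subtype.coe_ne_coe.1 hv₀)
  rw [Nat.card_congr (isotropicPlanesThroughEquiv hB hv₀)]
  exact Projectivization.card_of_finrank K _ (by lia)

/-- For every nonzero vector `v` in a 4-dimensional symplectic space over `F_p`,
the number of 2-dimensional totally isotropic subspaces containing `v` is `p+1`. -/
theorem stmt_1 (p : ℕ) [Fact p.Prime] (V : Type*) [AddCommGroup V]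
    [Module (ZMod p) V] [FiniteDimensional (ZMod p) V]
    (hV : finrank (ZMod p) V = 4)
    (B : V →ₗ[ZMod p] V →ₗ[ZMod p] ZMod p)
    (halt : ∀ x : V, B x x = 0)
    (hnd : ∀ x : V, (∀ y : V, B x y = 0) → x = 0)
    (v : V) (hv : v ≠ 0) :
    Nat.card {L : Submodule (ZMod p) V //
      v ∈ L ∧ finrank (ZMod p) L = 2 ∧ ∀ x ∈ L, ∀ y ∈ L, B x y = 0} = p + 1 := by
  have hBv : B v ≠ 0 := fun h ↦ hv (hnd v fun y ↦ by rw [h, LinearMap.zero_apply])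
  simpa [Finset.sum_range_succ, add_comm] using stmt_1_general hV halt hBv
end

section
/- If L is a 2-dimensional totally isotropic subspace of V, then the number of 2-dimensional totally isotropic subspaces H of V with H ∩ L ≠ {0} (this count includes L itself) is p(p+1)+1. -/
open Module

/-!
Let `L = Lᗮ` for an alternating form. A vector `v ∉ L` is not orthogonal to all of `L`, so
`L ⊓ vᗮ` is a hyperplane of `L`, and `(L ⊓ vᗮ) ⊔ K ∙ v` is the only totally isotropic subspace of
the same dimension as `L` which contains `v` and meets `L` in a hyperplane. The sets `H \ L`, for
`H` totally isotropic and meeting `L` in a hyperplane, thus partition the complement of `L`. They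
all have the same size, so counting vectors counts the subspaces `H`.
-/

open LinearMap (BilinForm)

section Field

variable {K V : Type*} [Field K] [AddCommGroup V] [Module K V]

theorem le_orthogonal_self_iff {B : BilinForm K V} {H : Submodule K V} :
    H ≤ B.orthogonal H ↔ ∀ x ∈ H, ∀ y ∈ H, B x y = 0 :=
  ⟨fun h x hx _ hy ↦ h hy x hx, fun h _ hy x hx ↦ h x hx _ hy⟩

theorem finrank_inf_ker_add_one {L : Submodule K V} [FiniteDimensional K L] {f : Dual K V}
    (hf : ¬ L ≤ f.ker) : finrank K ↥(L ⊓ f.ker) + 1 = finrank K L := by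
  have hres : f.domRestrict L ≠ 0 := fun h ↦ hf fun x hx ↦ LinearMap.congr_fun h ⟨x, hx⟩
  have hmap : L ⊓ f.ker = (f.domRestrict L).ker.map L.subtype := by
    rw [LinearMap.ker_domRestrict, Submodule.map_comap_subtype]
  rw [hmap, Submodule.finrank_map_subtype_eq, Dual.finrank_ker_add_one_of_ne_zero hres]

theorem sup_span_singleton_le_orthogonal {B : BilinForm K V} (hB : B.IsAlt) {W : Submodule K V}
    {v : V} (hW : W ≤ B.orthogonal W) (hv : W ≤ (B v).ker) :
    W ⊔ K ∙ v ≤ B.orthogonal (W ⊔ K ∙ v) := by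
  rw [le_orthogonal_self_iff] at hW ⊢
  intro x hx y hy
  obtain ⟨a, ha, _, hs, rfl⟩ := Submodule.mem_sup.1 hx
  obtain ⟨b, hb, _, ht, rfl⟩ := Submodule.mem_sup.1 hy
  obtain ⟨s, rfl⟩ := Submodule.mem_span_singleton.1 hs
  obtain ⟨t, rfl⟩ := Submodule.mem_span_singleton.1 ht
  have hav : B a v = 0 := hB.isRefl v a (hv ha)
  have hvb : B v b = 0 := hv hb
  simp [hW a ha b hb, hav, hvb, hB v]

theorem orthogonal_eq_self_of_finrank [FiniteDimensional K V] {B : BilinForm K V}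
    (hB : B.Nondegenerate) {L : Submodule K V} (hL : L ≤ B.orthogonal L)
    (hdim : finrank K V = 2 * finrank K L) : B.orthogonal L = L := by
  refine (Submodule.eq_of_le_of_finrank_eq hL ?_).symm
  rw [LinearMap.BilinForm.finrank_orthogonal hB]
  lia

/-- The neighbours of `L` in the dual polar graph of `B`: the totally isotropic subspaces of the
same dimension as `L` which meet `L` in a hyperplane of `L`. -/
def isotropicNeighbors (B : BilinForm K V) (L : Submodule K V) : Set (Submodule K V) :=
  {H | finrank K H = finrank K L ∧ H ≤ B.orthogonal H ∧ finrank K ↥(H ⊓ L) + 1 = finrank K L}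

/-- The subspace `(L ⊓ vᗮ) ⊔ K ∙ v`, which for `L = Lᗮ` and `v ∉ L` is the neighbour of `L`
through `v`. -/
def neighborThrough (B : BilinForm K V) (L : Submodule K V) (v : V) : Submodule K V :=
  L ⊓ (B v).ker ⊔ K ∙ v

variable {B : BilinForm K V} {L : Submodule K V} {v : V}

theorem notMem_isotropicNeighbors_self (B : BilinForm K V) (L : Submodule K V) :
    L ∉ isotropicNeighbors B L := by
  rintro ⟨-, -, hinf⟩
  rw [inf_idem] at hinf
  exact Nat.succ_ne_self _ hinf

theorem mem_neighborThrough (B : BilinForm K V) (L : Submodule K V) (v : V) :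
    v ∈ neighborThrough B L v :=
  Submodule.mem_sup_right (Submodule.mem_span_singleton_self v)

theorem neighborThrough_inf (B : BilinForm K V) (hv : v ∉ L) :
    neighborThrough B L v ⊓ L = L ⊓ (B v).ker := by
  have hdisj : K ∙ v ⊓ L = ⊥ := (Submodule.disjoint_span_singleton_of_notMem hv).symm.eq_bot
  rw [neighborThrough, sup_inf_assoc_of_le _ inf_le_left, hdisj, sup_bot_eq]

theorem not_le_ker_of_notMem (hB : B.IsRefl) (hL : B.orthogonal L ≤ L) (hv : v ∉ L) :
    ¬ L ≤ (B v).ker :=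
  fun h ↦ hv (hL fun x hx ↦ hB v x (h hx))

variable [FiniteDimensional K V]

theorem finrank_neighborThrough (hB : B.IsRefl) (hL : B.orthogonal L ≤ L) (hv : v ∉ L) :
    finrank K (neighborThrough B L v) = finrank K L := by
  have hv' : v ∉ L ⊓ (B v).ker := fun h ↦ hv h.1
  rw [neighborThrough, Submodule.finrank_sup_span_singleton hv',
    finrank_inf_ker_add_one (not_le_ker_of_notMem hB hL hv)]

theorem neighborThrough_mem_isotropicNeighbors (hB : B.IsAlt) (hL : B.orthogonal L = L)
    (hv : v ∉ L) : neighborThrough B L v ∈ isotropicNeighbors B L := by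
  refine ⟨finrank_neighborThrough hB.isRefl hL.le hv, ?_, ?_⟩
  · have hW : L ⊓ (B v).ker ≤ B.orthogonal (L ⊓ (B v).ker) :=
      inf_le_left.trans (hL.ge.trans (LinearMap.BilinForm.orthogonal_le inf_le_left))
    exact sup_span_singleton_le_orthogonal hB hW inf_le_right
  · rw [neighborThrough_inf B hv,
      finrank_inf_ker_add_one (not_le_ker_of_notMem hB.isRefl hL.le hv)]

theorem eq_neighborThrough (hB : B.IsRefl) (hL : B.orthogonal L ≤ L) {H : Submodule K V}
    (hH : H ∈ isotropicNeighbors B L) (hvH : v ∈ H) (hv : v ∉ L) : H = neighborThrough B L v := by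
  obtain ⟨hdim, hiso, hinf⟩ := hH
  have hle : H ⊓ L ≤ L ⊓ (B v).ker := fun x hx ↦ ⟨hx.2, hiso hx.1 v hvH⟩
  have heq : H ⊓ L = L ⊓ (B v).ker := by
    refine Submodule.eq_of_le_of_finrank_eq hle ?_
    have := finrank_inf_ker_add_one (not_le_ker_of_notMem hB hL hv)
    lia
  refine (Submodule.eq_of_le_of_finrank_eq (sup_le ?_ ?_) ?_).symm
  · exact heq.ge.trans inf_le_left
  · exact (Submodule.span_singleton_le_iff_mem v H).2 hvH
  · exact (finrank_neighborThrough hB hL hv).trans hdim.symm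

theorem biUnion_isotropicNeighbors_sdiff (hB : B.IsAlt) (hL : B.orthogonal L = L) :
    ⋃ H ∈ isotropicNeighbors B L, (H \ L : Set V) = (L : Set V)ᶜ := by
  refine subset_antisymm (Set.iUnion₂_subset fun _ _ _ hv ↦ hv.2) fun v hv ↦ ?_
  exact Set.mem_biUnion (neighborThrough_mem_isotropicNeighbors hB hL hv)
    ⟨mem_neighborThrough B L v, hv⟩

theorem pairwiseDisjoint_isotropicNeighbors_sdiff (hB : B.IsRefl) (hL : B.orthogonal L ≤ L) :
    (isotropicNeighbors B L).PairwiseDisjoint fun H ↦ (H \ L : Set V) := by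
  refine fun H hH H' hH' hne ↦ Set.disjoint_left.2 fun v hv hv' ↦ hne ?_
  rw [eq_neighborThrough hB hL hH hv.1 hv.2, eq_neighborThrough hB hL hH' hv'.1 hv.2]

theorem setOf_finrank_le_finrank_inf_add_one (hL : L ≤ B.orthogonal L) :
    {H : Submodule K V | finrank K H = finrank K L ∧ H ≤ B.orthogonal H ∧
      finrank K L ≤ finrank K ↥(H ⊓ L) + 1} = insert L (isotropicNeighbors B L) := by
  ext H
  constructor
  · rintro ⟨hdim, hiso, hinf⟩
    rcases (Submodule.finrank_mono (inf_le_right : H ⊓ L ≤ L)).eq_or_lt with heq | hlt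
    · have hLH : L ≤ H := inf_eq_right.1 (Submodule.eq_of_le_of_finrank_eq inf_le_right heq)
      exact .inl (Submodule.eq_of_le_of_finrank_eq hLH hdim.symm).symm
    · exact .inr ⟨hdim, hiso, by lia⟩
  · rintro (rfl | ⟨hdim, hiso, hinf⟩)
    · exact ⟨rfl, hL, by rw [inf_idem]; exact Nat.le_succ _⟩
    · exact ⟨hdim, hiso, hinf.ge⟩

theorem ncard_coe_submodule (H : Submodule K V) : (H : Set V).ncard = Nat.card K ^ finrank K H :=
  natCard_eq_pow_finrank (V := H)

end Field

section FiniteField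

variable {K V : Type*} [Field K] [Finite K] [AddCommGroup V] [Module K V] [FiniteDimensional K V]

theorem ncard_compl_submodule (L : Submodule K V) :
    ((L : Set V)ᶜ).ncard = (Nat.card K - 1) * Nat.card K ^ finrank K L *
      ∑ i ∈ Finset.range (finrank K (V ⧸ L)), Nat.card K ^ i := by
  have : Finite V := Module.finite_of_finite K
  rw [Set.ncard_compl, ncard_coe_submodule, natCard_eq_pow_finrank (K := K),
    ← L.finrank_quotient_add_finrank, pow_add, ← Nat.sub_one_mul,
    ← geom_sum_mul_of_one_le Nat.card_pos]
  ring

/-- The factor `Nat.card K` on the left avoids the truncated exponent `finrank K H - 1`. -/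
theorem card_mul_ncard_sdiff_of_finrank_inf {H L : Submodule K V}
    (h : finrank K ↥(H ⊓ L) + 1 = finrank K H) :
    Nat.card K * (H \ L : Set V).ncard = (Nat.card K - 1) * Nat.card K ^ finrank K H := by
  have : Finite V := Module.finite_of_finite K
  have hcard : (H \ L : Set V).ncard = Nat.card K ^ finrank K H -
      Nat.card K ^ finrank K ↥(H ⊓ L) := by
    rw [← ncard_coe_submodule, ← ncard_coe_submodule,
      ← Set.ncard_inter_add_ncard_sdiff_eq_ncard (H : Set V) L, Submodule.coe_inf,
      Nat.add_sub_cancel_left]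
  rw [hcard, ← h, pow_succ', ← Nat.sub_one_mul]
  ring

theorem ncard_isotropicNeighbors {B : BilinForm K V} (hB : B.IsAlt) {L : Submodule K V}
    (hL : B.orthogonal L = L) :
    (isotropicNeighbors B L).ncard =
      Nat.card K * ∑ i ∈ Finset.range (finrank K (V ⧸ L)), Nat.card K ^ i := by
  have : Finite V := Module.finite_of_finite K
  set c := (Nat.card K - 1) * Nat.card K ^ finrank K L
  have hc : 0 < c :=
    Nat.mul_pos (Nat.sub_pos_of_lt Finite.one_lt_card) (Nat.pow_pos Nat.card_pos)
  refine Nat.eq_of_mul_eq_mul_left hc ?_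
  calc c * (isotropicNeighbors B L).ncard
      = ∑ᶠ H ∈ isotropicNeighbors B L, c := by
        rw [← finsum_one, mul_finsum_mem, mul_one]
    _ = ∑ᶠ H ∈ isotropicNeighbors B L, Nat.card K * (H \ L : Set V).ncard :=
        finsum_mem_congr rfl fun H ⟨hdim, _, hinf⟩ ↦ by
          rw [card_mul_ncard_sdiff_of_finrank_inf (hinf.trans hdim.symm), hdim]
    _ = Nat.card K * ((L : Set V)ᶜ).ncard := by
        rw [← mul_finsum_mem, ← biUnion_isotropicNeighbors_sdiff hB hL,
          (Set.toFinite _).ncard_biUnion (fun _ _ ↦ Set.toFinite _)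
            (pairwiseDisjoint_isotropicNeighbors_sdiff hB.isRefl hL.le)]
    _ = c * (Nat.card K * ∑ i ∈ Finset.range (finrank K (V ⧸ L)), Nat.card K ^ i) := by
        rw [ncard_compl_submodule, mul_left_comm]

theorem stmt_2_general {n : ℕ} (hV : finrank K V = 2 * n) {B : BilinForm K V} (halt : B.IsAlt)
    (hnd : B.SeparatingLeft) {L : Submodule K V} (hLn : finrank K L = n)
    (hLiso : ∀ x ∈ L, ∀ y ∈ L, B x y = 0) :
    Nat.card {H : Submodule K V // finrank K H = n ∧ (∀ x ∈ H, ∀ y ∈ H, B x y = 0) ∧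
      n ≤ finrank K ↥(H ⊓ L) + 1} = Nat.card K * ∑ i ∈ Finset.range n, Nat.card K ^ i + 1 := by
  have : Finite V := Module.finite_of_finite K
  subst hLn
  have hL : B.orthogonal L = L := orthogonal_eq_self_of_finrank
    (halt.isRefl.nondegenerate_iff_separatingLeft.2 hnd) (le_orthogonal_self_iff.2 hLiso) hV
  have hquot : finrank K (V ⧸ L) = finrank K L := by
    have := L.finrank_quotient_add_finrank
    lia
  simp_rw [← le_orthogonal_self_iff]
  rw [← Set.coe_ofPred, Nat.card_coe_set_eq, setOf_finrank_le_finrank_inf_add_one hL.ge,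
    Set.ncard_insert_of_notMem (notMem_isotropicNeighbors_self B L),
    ncard_isotropicNeighbors halt hL, hquot]

end FiniteField

/-- If `L` is a 2-dimensional totally isotropic subspace of a 4-dimensional symplectic
space over `F_p`, the number of 2-dimensional totally isotropic subspaces `H` with
`H ⊓ L ≠ ⊥` (including `L` itself) is `p(p+1)+1`. -/
theorem stmt_2 (p : ℕ) [Fact p.Prime] (V : Type*) [AddCommGroup V]
    [Module (ZMod p) V] [FiniteDimensional (ZMod p) V]
    (hV : finrank (ZMod p) V = 4)
    (B : V →ₗ[ZMod p] V →ₗ[ZMod p] ZMod p)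
    (halt : ∀ x : V, B x x = 0)
    (hnd : ∀ x : V, (∀ y : V, B x y = 0) → x = 0)
    (L : Submodule (ZMod p) V) (hL2 : finrank (ZMod p) L = 2)
    (hLiso : ∀ x ∈ L, ∀ y ∈ L, B x y = 0) :
    Nat.card {H : Submodule (ZMod p) V //
      finrank (ZMod p) H = 2 ∧ (∀ x ∈ H, ∀ y ∈ H, B x y = 0) ∧ H ⊓ L ≠ ⊥}
      = p * (p + 1) + 1 := by
  simpa [← Submodule.one_le_finrank_iff, Finset.sum_range_succ, add_comm] using
    stmt_2_general (n := 2) hV halt hnd hL2 hLiso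
end

section
/- If L is a 2-dimensional subspace of V on which the restriction of B is nondegenerate (equivalently, L is not totally isotropic), then the number of 2-dimensional totally isotropic subspaces H of V with H ∩ L ≠ {0} is (p+1)^2. -/
open Module

/-!
Since `B` is nondegenerate on the plane `L`, the space splits as `L ⊕ Lᗮ`. If a totally isotropic
plane `H` contains a nonzero `x ∈ L`, then `H` lies in the kernel of `B x`, which is
`⟨x⟩ ⊕ Lᗮ`, so `H` is the sum of the line `H ⊓ L = ⟨x⟩` and the line `H ⊓ Lᗮ`. Conversely, lines are
isotropic for an alternating form, so any line of `L` and any line of `Lᗮ` span a totally isotropic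
plane. Hence the planes in question correspond to pairs of lines, one in `L` and one in `Lᗮ`.
-/

theorem sup_inf_eq_of_le_of_le_of_disjoint {α : Type*} [Lattice α] [OrderBot α]
    [IsModularLattice α] {a b l m : α} (hab : Disjoint a b) (hl : l ≤ a) (hm : m ≤ b) :
    (l ⊔ m) ⊓ a = l := by
  rw [sup_inf_assoc_of_le _ hl, (hab.symm.mono_left hm).eq_bot, sup_bot_eq]

section Dimension

variable {K V W : Type*} [DivisionRing K] [AddCommGroup V] [Module K V] [AddCommGroup W]
  [Module K W]

theorem finrank_sup_of_disjoint {S T : Submodule K V} [FiniteDimensional K S]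
    [FiniteDimensional K T] (h : Disjoint S T) :
    finrank K (S ⊔ T : Submodule K V) = finrank K S + finrank K T := by
  rw [← Submodule.finrank_sup_add_finrank_inf_eq, h.eq_bot, finrank_bot, add_zero]

theorem inf_ker_eq_span_singleton {L : Submodule K V} (hL2 : finrank K L = 2) {f : V →ₗ[K] W}
    (hf : ¬ L ≤ LinearMap.ker f) {x : V} (hxL : x ∈ L) (hx0 : x ≠ 0) (hfx : f x = 0) :
    L ⊓ LinearMap.ker f = K ∙ x := by
  have : FiniteDimensional K L := .of_finrank_eq_succ hL2
  have hlt : finrank K (L ⊓ LinearMap.ker f : Submodule K V) < 2 :=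
    hL2 ▸ Submodule.finrank_lt_finrank_of_lt (inf_lt_left.2 hf)
  have hle : K ∙ x ≤ L ⊓ LinearMap.ker f :=
    (Submodule.span_singleton_le_iff_mem _ _).2 ⟨hxL, hfx⟩
  refine (Submodule.eq_of_le_of_finrank_le hle ?_).symm
  rw [finrank_span_singleton hx0]
  lia

/-- The lines (one-dimensional subspaces) of `V` contained in `L`, realised as
subspaces of the ambient space rather than of `L`. -/
abbrev LinesIn (L : Submodule K V) : Type _ :=
  {l : Submodule K V // l ≤ L ∧ finrank K l = 1}

/-- The identification of the points of the projective space of `L` with the lines of the ambient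
space contained in `L`, through which these lines are counted. -/
noncomputable def projectivizationEquivLinesIn (L : Submodule K V) :
    Projectivization K L ≃ LinesIn L :=
  (Projectivization.equivSubmodule K L).trans <|
    ((Submodule.MapSubtype.orderIso L).toEquiv.subtypeEquiv fun l ↦ by
      rw [← Submodule.finrank_map_subtype_eq L l]; rfl).trans <|
    Equiv.subtypeSubtypeEquivSubtypeInter (· ≤ L) (finrank K · = 1)

end Dimension

theorem card_linesIn {K V : Type*} [Field K] [Finite K] [AddCommGroup V] [Module K V]
    {L : Submodule K V} {n : ℕ} (hL : finrank K L = n) :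
    Nat.card (LinesIn L) = ∑ i ∈ Finset.range n, Nat.card K ^ i := by
  rw [← Nat.card_congr (projectivizationEquivLinesIn L), Projectivization.card_of_finrank K L hL]

section Isotropic

variable {R M : Type*} [CommRing R] [AddCommGroup M] [Module R M] {B : LinearMap.BilinForm R M}
  {H L : Submodule R M}

/-- A subspace is totally isotropic if the bilinear form `B` vanishes identically on it; for
Mathlib's orthogonal complement this amounts to `H ≤ B.orthogonal H`. -/
def IsTotallyIsotropic (B : LinearMap.BilinForm R M) (H : Submodule R M) : Prop :=
  ∀ x ∈ H, ∀ y ∈ H, B x y = 0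

theorem isTotallyIsotropic_span_singleton {x : M} (hx : B x x = 0) :
    IsTotallyIsotropic B (R ∙ x) := by
  intro y hy z hz
  obtain ⟨a, rfl⟩ := Submodule.mem_span_singleton.1 hy
  obtain ⟨b, rfl⟩ := Submodule.mem_span_singleton.1 hz
  simp [hx]

theorem IsTotallyIsotropic.sup (hB : B.IsRefl) (hH : IsTotallyIsotropic B H)
    (hL : IsTotallyIsotropic B L) (hHL : L ≤ B.orthogonal H) : IsTotallyIsotropic B (H ⊔ L) := by
  intro x hx y hy
  obtain ⟨a, ha, b, hb, rfl⟩ := Submodule.mem_sup.1 hx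
  obtain ⟨c, hc, d, hd, rfl⟩ := Submodule.mem_sup.1 hy
  simp [hH a ha c hc, hL b hb d hd, hHL hd a ha, hB c b (hHL hb c hc)]

theorem restrict_nondegenerate_of_isRefl (hB : B.IsRefl)
    (hL : ∀ x ∈ L, (∀ y ∈ L, B x y = 0) → x = 0) : (B.restrict L).Nondegenerate :=
  (hB.domRestrict L).nondegenerate_iff_separatingLeft.2 fun x hx ↦
    Subtype.ext (hL x x.2 fun y hy ↦ hx ⟨y, hy⟩)

end Isotropic

section Plane

variable {K V : Type*} [Field K] [AddCommGroup V] [Module K V] {B : LinearMap.BilinForm K V}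
  {H L l : Submodule K V}

theorem isTotallyIsotropic_of_finrank_eq_one (hB : B.IsAlt) (hl : finrank K l = 1) :
    IsTotallyIsotropic B l := by
  obtain ⟨x, hx, hx0⟩ := l.exists_mem_ne_zero_of_ne_bot (by rintro rfl; simp at hl)
  rw [eq_span_singleton_of_mem_of_finrank_eq_one hl hx hx0]
  exact isTotallyIsotropic_span_singleton (hB x)

theorem inf_ker_eq_span_singleton_of_restrict_nondegenerate (hL2 : finrank K L = 2)
    (hL : (B.restrict L).Nondegenerate) {x : V} (hxL : x ∈ L) (hx0 : x ≠ 0) (hx : B x x = 0) :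
    L ⊓ LinearMap.ker (B x) = K ∙ x := by
  refine inf_ker_eq_span_singleton hL2 (fun hle ↦ hx0 ?_) hxL hx0 hx
  exact congrArg Subtype.val (hL.1 ⟨x, hxL⟩ fun y ↦ hle y.2)

namespace IsTotallyIsotropic

theorem inf_eq_span_singleton (hH : IsTotallyIsotropic B H) (hL2 : finrank K L = 2)
    (hL : (B.restrict L).Nondegenerate) {x : V} (hxH : x ∈ H) (hxL : x ∈ L) (hx0 : x ≠ 0) :
    H ⊓ L = K ∙ x := by
  apply le_antisymm
  · rw [← inf_ker_eq_span_singleton_of_restrict_nondegenerate hL2 hL hxL hx0 (hH x hxH x hxH),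
      inf_comm]
    exact inf_le_inf_left L (hH x hxH)
  · exact (Submodule.span_singleton_le_iff_mem _ _).2 ⟨hxH, hxL⟩

theorem finrank_inf_eq_one (hH : IsTotallyIsotropic B H) (hL2 : finrank K L = 2)
    (hL : (B.restrict L).Nondegenerate) (hHL : H ⊓ L ≠ ⊥) :
    finrank K (H ⊓ L : Submodule K V) = 1 := by
  obtain ⟨x, ⟨hxH, hxL⟩, hx0⟩ := Submodule.exists_mem_ne_zero_of_ne_bot hHL
  rw [hH.inf_eq_span_singleton hL2 hL hxH hxL hx0, finrank_span_singleton hx0]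

variable [FiniteDimensional K V]

theorem inf_sup_inf_orthogonal_eq (hH : IsTotallyIsotropic B H) (hB : B.IsRefl)
    (hL2 : finrank K L = 2) (hL : (B.restrict L).Nondegenerate) (hHL : H ⊓ L ≠ ⊥) :
    (H ⊓ L) ⊔ (H ⊓ B.orthogonal L) = H := by
  obtain ⟨x, ⟨hxH, hxL⟩, hx0⟩ := Submodule.exists_mem_ne_zero_of_ne_bot hHL
  have hH_le : H ≤ LinearMap.ker (B x) := hH x hxH
  have horth_le : B.orthogonal L ≤ LinearMap.ker (B x) := fun y hy ↦ hy x hxL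
  have hker : (K ∙ x) ⊔ B.orthogonal L = LinearMap.ker (B x) := by
    rw [← inf_ker_eq_span_singleton_of_restrict_nondegenerate hL2 hL hxL hx0 (hH x hxH x hxH),
      inf_comm, inf_sup_assoc_of_le _ horth_le,
      (B.isCompl_orthogonal_of_restrict_nondegenerate hB hL).sup_eq_top, inf_top_eq]
  have hspan_le : K ∙ x ≤ H := (Submodule.span_singleton_le_iff_mem _ _).2 hxH
  rw [hH.inf_eq_span_singleton hL2 hL hxH hxL hx0, inf_comm, ← sup_inf_assoc_of_le _ hspan_le, hker,
    inf_eq_right.2 hH_le]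

theorem finrank_inf_orthogonal_eq_one (hH : IsTotallyIsotropic B H) (hH2 : finrank K H = 2)
    (hB : B.IsRefl) (hL2 : finrank K L = 2) (hL : (B.restrict L).Nondegenerate)
    (hHL : H ⊓ L ≠ ⊥) : finrank K (H ⊓ B.orthogonal L : Submodule K V) = 1 := by
  have hdisj : Disjoint (H ⊓ L) (H ⊓ B.orthogonal L) :=
    (B.isCompl_orthogonal_of_restrict_nondegenerate hB hL).disjoint.mono inf_le_right inf_le_right
  have hsum := finrank_sup_of_disjoint hdisj
  rw [hH.inf_sup_inf_orthogonal_eq hB hL2 hL hHL, hH2, hH.finrank_inf_eq_one hL2 hL hHL] at hsum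
  lia

end IsTotallyIsotropic

/-- The totally isotropic planes for `B` that meet `L` nontrivially. -/
abbrev IsotropicPlanesMeeting (B : LinearMap.BilinForm K V) (L : Submodule K V) : Type _ :=
  {H : Submodule K V // finrank K H = 2 ∧ IsTotallyIsotropic B H ∧ H ⊓ L ≠ ⊥}

variable [FiniteDimensional K V]

/-- A totally isotropic plane meeting the nondegenerate plane `L` is determined by the lines it
cuts out on `L` and on the orthogonal complement of `L`, and these lines can be prescribed. -/
def isotropicPlanesMeetingEquiv (hB : B.IsAlt) (hL2 : finrank K L = 2)
    (hL : (B.restrict L).Nondegenerate) :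
    IsotropicPlanesMeeting B L ≃ LinesIn L × LinesIn (B.orthogonal L) where
  toFun := fun ⟨H, hH2, hH, hHL⟩ ↦
    (⟨H ⊓ L, inf_le_right, hH.finrank_inf_eq_one hL2 hL hHL⟩,
      ⟨H ⊓ B.orthogonal L, inf_le_right,
        hH.finrank_inf_orthogonal_eq_one hH2 hB.isRefl hL2 hL hHL⟩)
  invFun := fun ⟨⟨l, hlL, hl1⟩, ⟨m, hmL, hm1⟩⟩ ↦
    have hdisj := (B.isCompl_orthogonal_of_restrict_nondegenerate hB.isRefl hL).disjoint
    ⟨l ⊔ m, by rw [finrank_sup_of_disjoint (hdisj.mono hlL hmL), hl1, hm1],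
      (isTotallyIsotropic_of_finrank_eq_one hB hl1).sup hB.isRefl
        (isTotallyIsotropic_of_finrank_eq_one hB hm1)
        (hmL.trans (LinearMap.BilinForm.orthogonal_le hlL)),
      by
        rw [sup_inf_eq_of_le_of_le_of_disjoint hdisj hlL hmL]
        rintro rfl
        simp at hl1⟩
  left_inv := fun ⟨_, _, hH, hHL⟩ ↦
    Subtype.ext (hH.inf_sup_inf_orthogonal_eq hB.isRefl hL2 hL hHL)
  right_inv := fun ⟨⟨l, hlL, _⟩, ⟨m, hmL, _⟩⟩ ↦ by
    have hdisj := (B.isCompl_orthogonal_of_restrict_nondegenerate hB.isRefl hL).disjoint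
    ext1 <;> apply Subtype.ext
    · exact sup_inf_eq_of_le_of_le_of_disjoint hdisj hlL hmL
    · exact (congrArg (· ⊓ B.orthogonal L) (sup_comm l m)).trans
        (sup_inf_eq_of_le_of_le_of_disjoint hdisj.symm hmL hlL)

end Plane

theorem stmt_3_general {K V : Type*} [Field K] [Finite K] [AddCommGroup V] [Module K V]
    {n : ℕ} (hV : finrank K V = n + 2) {B : LinearMap.BilinForm K V} (hB : B.IsAlt)
    {L : Submodule K V} (hL2 : finrank K L = 2) (hL : (B.restrict L).Nondegenerate) :
    Nat.card (IsotropicPlanesMeeting B L) =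
      (Nat.card K + 1) * ∑ i ∈ Finset.range n, Nat.card K ^ i := by
  have : FiniteDimensional K V := .of_finrank_eq_succ hV
  have horth : finrank K (B.orthogonal L) = n := by
    have := Submodule.finrank_add_eq_of_isCompl
      (B.isCompl_orthogonal_of_restrict_nondegenerate hB.isRefl hL)
    lia
  rw [Nat.card_congr (isotropicPlanesMeetingEquiv hB hL2 hL), Nat.card_prod, card_linesIn hL2,
    card_linesIn horth, geom_sum_two]

/-- If `L` is a 2-dimensional subspace of a 4-dimensional symplectic space over `F_p`
on which the restriction of `B` is nondegenerate, the number of 2-dimensional totally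
isotropic subspaces `H` with `H ⊓ L ≠ ⊥` is `(p+1)^2`. -/
theorem stmt_3 (p : ℕ) [Fact p.Prime] (V : Type*) [AddCommGroup V]
    [Module (ZMod p) V] [FiniteDimensional (ZMod p) V]
    (hV : finrank (ZMod p) V = 4)
    (B : V →ₗ[ZMod p] V →ₗ[ZMod p] ZMod p)
    (halt : ∀ x : V, B x x = 0)
    (hnd : ∀ x : V, (∀ y : V, B x y = 0) → x = 0)
    (L : Submodule (ZMod p) V) (hL2 : finrank (ZMod p) L = 2)
    (hLnd : ∀ x ∈ L, (∀ y ∈ L, B x y = 0) → x = 0) :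
    Nat.card {H : Submodule (ZMod p) V //
      finrank (ZMod p) H = 2 ∧ (∀ x ∈ H, ∀ y ∈ H, B x y = 0) ∧ H ⊓ L ≠ ⊥}
      = (p + 1) ^ 2 := by
  have hL := restrict_nondegenerate_of_isRefl (LinearMap.IsAlt.isRefl halt) hLnd
  exact (stmt_3_general hV halt hL2 hL).trans (by rw [geom_sum_two, Nat.card_zmod, sq])
end

section
/- Assume p ≥ 3 and that V = r ⊕ s, where r and s are 2-dimensional subspaces which are orthogonal to each other (B(x,y)=0 for all x ∈ r, y ∈ s). Let v ∈ V be a vector with v ∉ r ∪ s, and let t be any 2-dimensional subspace of V. Then there exists a 2-dimensional totally isotropic subspace L of V such that v ∈ L, L ≠ t, L ∩ r = {0}, and L ∩ s = {0}. -/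
open Module

/-!
Write `v = a + b` with `a ∈ r` and `b ∈ s`, both nonzero. As `B` is nondegenerate and `r`, `s` are
orthogonal, there are `a' ∈ r` and `b' ∈ s` with `B a a' = 1` and `B b b' = -1`. The two values
cancel, so `L = ⟨a + b, a' + b'⟩` is totally isotropic. Each of them is nonzero, so `a, a'` are
linearly independent, which makes `L` a plane meeting `s` trivially; likewise for `b, b'` and `r`.
Replacing `a'` by `a' + a` preserves all of this but changes `L`, since `a ∈ r` is not in `L`; so
one of the two planes is not `t`.
-/

section Span

variable {ι R M : Type*} [Ring R] [AddCommGroup M] [Module R M] {r s : Submodule R M}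
  {f g : ι → M}

theorem linearIndependent_mkQ_comp_add (hrs : Disjoint r s) (hf : ∀ i, f i ∈ r)
    (hg : ∀ i, g i ∈ s) (hli : LinearIndependent R f) :
    LinearIndependent R (s.mkQ ∘ (f + g)) := by
  have hcomp : s.mkQ ∘ (f + g) = s.mkQ ∘ f := by
    ext i
    simp [(Submodule.Quotient.mk_eq_zero s).2 (hg i)]
  have hspan : Submodule.span R (Set.range f) ≤ r :=
    Submodule.span_le.2 (Set.range_subset_iff.2 hf)
  rw [hcomp]
  exact hli.map (by simpa only [Submodule.ker_mkQ] using hrs.mono_left hspan)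

theorem linearIndependent_add_of_disjoint (hrs : Disjoint r s) (hf : ∀ i, f i ∈ r)
    (hg : ∀ i, g i ∈ s) (hli : LinearIndependent R f) : LinearIndependent R (f + g) :=
  (linearIndependent_mkQ_comp_add hrs hf hg hli).of_comp

theorem disjoint_span_range_add (hrs : Disjoint r s) (hf : ∀ i, f i ∈ r)
    (hg : ∀ i, g i ∈ s) (hli : LinearIndependent R f) :
    Disjoint (Submodule.span R (Set.range (f + g))) s := by
  simpa only [Submodule.ker_mkQ] using
    Submodule.range_ker_disjoint (linearIndependent_mkQ_comp_add hrs hf hg hli)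

theorem span_pair_add_ne_span_pair {x y z : M} (hz : z ∉ Submodule.span R {x, y}) :
    Submodule.span R {x, y + z} ≠ Submodule.span R {x, y} := by
  intro heq
  have hy : y ∈ Submodule.span R {x, y} := Submodule.mem_span_of_mem (by simp)
  have hyz : y + z ∈ Submodule.span R {x, y} := heq ▸ Submodule.mem_span_of_mem (by simp)
  exact hz ((Submodule.add_mem_iff_right _ hy).1 hyz)

end Span

section IsAlt

variable {R M : Type*} [CommRing R] [AddCommGroup M] [Module R M] {B : M →ₗ[R] M →ₗ[R] R}
  {x y : M}

theorem linearIndependent_pair_of_isAlt [NoZeroDivisors R] (hB : B.IsAlt) (hxy : B x y ≠ 0) :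
    LinearIndependent R ![x, y] := by
  refine LinearIndependent.pair_iff.2 fun c d h => ⟨?_, ?_⟩
  · have hy : c * B x y = 0 := by
      simpa [hB.self_eq_zero] using LinearMap.congr_fun (congrArg B h) y
    exact (mul_eq_zero.1 hy).resolve_right hxy
  · have hx : d * B x y = 0 := by simpa [hB.self_eq_zero] using congrArg (B x) h
    exact (mul_eq_zero.1 hx).resolve_right hxy

theorem apply_eq_zero_of_mem_span_pair (hB : B.IsAlt) (hxy : B x y = 0) {u w : M}
    (hu : u ∈ Submodule.span R {x, y}) (hw : w ∈ Submodule.span R {x, y}) : B u w = 0 := by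
  obtain ⟨c, d, rfl⟩ := Submodule.mem_span_pair.1 hu
  obtain ⟨c', d', rfl⟩ := Submodule.mem_span_pair.1 hw
  simp [hB.self_eq_zero, hxy, hB.eq_iff.1 hxy]

end IsAlt

section Field

variable {K V : Type*} [Field K] [AddCommGroup V] [Module K V] {r s : Submodule K V}

theorem exists_mem_apply_eq_of_codisjoint (hrs : Codisjoint r s) {f : V →ₗ[K] K} (hf : f ≠ 0)
    (hs : ∀ y ∈ s, f y = 0) (c : K) : ∃ y ∈ r, f y = c := by
  have hne : f.domRestrict r ≠ 0 := by
    refine fun h => hf (LinearMap.ext fun z => ?_)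
    obtain ⟨x, y, hx, hy, rfl⟩ := Submodule.codisjoint_iff_exists_add_eq.1 hrs z
    simpa [hs y hy] using LinearMap.congr_fun h ⟨x, hx⟩
  obtain ⟨y, hy⟩ := LinearMap.surjective hne c
  exact ⟨y, y.2, hy⟩

/-- `L` is a totally isotropic plane meeting both `r` and `s` trivially. When `V` is a
symplectic space of dimension 4, these are the Lagrangian subspaces transversal to `r` and `s`. -/
structure IsTransversalIsotropicPlane (B : V →ₗ[K] V →ₗ[K] K) (r s L : Submodule K V) : Prop where
  finrank_eq_two : finrank K L = 2
  isotropic : ∀ x ∈ L, ∀ y ∈ L, B x y = 0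
  disjoint_left : Disjoint L r
  disjoint_right : Disjoint L s

variable {B : V →ₗ[K] V →ₗ[K] K}

theorem isTransversalIsotropicPlane_span_pair (hB : B.IsAlt) (hrs : Disjoint r s)
    (horth : ∀ x ∈ r, ∀ y ∈ s, B x y = 0) {a a' b b' : V} (ha : a ∈ r) (ha' : a' ∈ r)
    (hb : b ∈ s) (hb' : b' ∈ s) (haa' : B a a' ≠ 0) (hcancel : B a a' + B b b' = 0) :
    IsTransversalIsotropicPlane B r s (Submodule.span K {a + b, a' + b'}) := by
  have hbb' : B b b' ≠ 0 := fun h => haa' (by simpa [h] using hcancel)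
  have hliA := linearIndependent_pair_of_isAlt hB haa'
  have hliB := linearIndependent_pair_of_isAlt hB hbb'
  have hmemA : ∀ i, ![a, a'] i ∈ r := by simp [Fin.forall_fin_two, ha, ha']
  have hmemB : ∀ i, ![b, b'] i ∈ s := by simp [Fin.forall_fin_two, hb, hb']
  have hrange : Set.range (![a, a'] + ![b, b']) = {a + b, a' + b'} := by simp [Set.pair_comm]
  have hperp : B (a + b) (a' + b') = 0 := by
    simpa [horth a ha b' hb', hB.eq_iff.1 (horth a' ha' b hb)] using hcancel
  rw [← hrange]
  refine ⟨?_, ?_, ?_, disjoint_span_range_add hrs hmemA hmemB hliA⟩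
  · simpa only [Fintype.card_fin] using
      finrank_span_eq_card (linearIndependent_add_of_disjoint hrs hmemA hmemB hliA)
  · rw [hrange]
    exact fun x hx y hy => apply_eq_zero_of_mem_span_pair hB hperp hx hy
  · rw [add_comm]
    exact disjoint_span_range_add hrs.symm hmemB hmemA hliB

theorem exists_isTransversalIsotropicPlane_ne (hB : B.IsAlt) (hrs : Disjoint r s)
    (horth : ∀ x ∈ r, ∀ y ∈ s, B x y = 0) {a a' b b' : V} (ha : a ∈ r) (ha' : a' ∈ r)
    (hb : b ∈ s) (hb' : b' ∈ s) (haa' : B a a' ≠ 0) (hcancel : B a a' + B b b' = 0)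
    (t : Submodule K V) : ∃ L, IsTransversalIsotropicPlane B r s L ∧ a + b ∈ L ∧ L ≠ t := by
  have hL := isTransversalIsotropicPlane_span_pair hB hrs horth ha ha' hb hb' haa' hcancel
  rcases ne_or_eq (Submodule.span K {a + b, a' + b'}) t with hne | rfl
  · exact ⟨_, hL, Submodule.mem_span_of_mem (by simp), hne⟩
  · have hshift : B a (a' + a) = B a a' := by simp [hB.self_eq_zero]
    have ha0 : a ≠ 0 := fun h => haa' (by simp [h])
    have haL : a ∉ Submodule.span K {a + b, a' + b'} :=
      fun h => ha0 (Submodule.disjoint_def.1 hL.disjoint_left a h ha)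
    refine ⟨Submodule.span K {a + b, (a' + a) + b'}, ?_, Submodule.mem_span_of_mem (by simp), ?_⟩
    · exact isTransversalIsotropicPlane_span_pair hB hrs horth ha (r.add_mem ha' ha) hb hb'
        (by rwa [hshift]) (by rwa [hshift])
    · rw [add_right_comm]
      exact span_pair_add_ne_span_pair haL

theorem stmt_4_general (hB : B.IsAlt) (hnd : B.SeparatingLeft) (hrs : IsCompl r s)
    (horth : ∀ x ∈ r, ∀ y ∈ s, B x y = 0) {v : V} (hv : v ∉ (r : Set V) ∪ (s : Set V))
    (t : Submodule K V) :
    ∃ L : Submodule K V, finrank K L = 2 ∧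
      (∀ x ∈ L, ∀ y ∈ L, B x y = 0) ∧ v ∈ L ∧ L ≠ t ∧ L ⊓ r = ⊥ ∧ L ⊓ s = ⊥ := by
  obtain ⟨a, b, ha, hb, rfl⟩ := Submodule.codisjoint_iff_exists_add_eq.1 hrs.codisjoint v
  have ha0 : a ≠ 0 := by rintro rfl; exact hv (.inr (by simpa using hb))
  have hb0 : b ≠ 0 := by rintro rfl; exact hv (.inl (by simpa using ha))
  have apply_ne_zero {x : V} (hx : x ≠ 0) : B x ≠ 0 :=
    fun h => hx (hnd x (LinearMap.congr_fun h))
  obtain ⟨a', ha', haa'⟩ : ∃ a' ∈ r, B a a' = 1 :=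
    exists_mem_apply_eq_of_codisjoint hrs.codisjoint (apply_ne_zero ha0) (horth a ha) 1
  obtain ⟨b', hb', hbb'⟩ : ∃ b' ∈ s, B b b' = -1 :=
    exists_mem_apply_eq_of_codisjoint hrs.codisjoint.symm (apply_ne_zero hb0)
      (fun x hx => hB.eq_iff.1 (horth x hx b hb)) (-1)
  obtain ⟨L, hL, hvL, hne⟩ := exists_isTransversalIsotropicPlane_ne hB hrs.disjoint horth
    ha ha' hb hb' (by simp [haa']) (by simp [haa', hbb']) t
  exact ⟨L, hL.finrank_eq_two, hL.isotropic, hvL, hne, hL.disjoint_left.eq_bot,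
    hL.disjoint_right.eq_bot⟩

end Field

/-- Let `p ≥ 3`, `V = r ⊕ s` with `r, s` 2-dimensional mutually orthogonal subspaces
of a 4-dimensional symplectic space over `F_p`, let `v ∉ r ∪ s` and let `t` be any
2-dimensional subspace. Then there is a 2-dimensional totally isotropic subspace `L`
with `v ∈ L`, `L ≠ t`, `L ∩ r = 0` and `L ∩ s = 0`. -/
theorem stmt_4 (p : ℕ) [Fact p.Prime] (hp3 : 3 ≤ p) (V : Type*) [AddCommGroup V]
    [Module (ZMod p) V] [FiniteDimensional (ZMod p) V]
    (hV : finrank (ZMod p) V = 4)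
    (B : V →ₗ[ZMod p] V →ₗ[ZMod p] ZMod p)
    (halt : ∀ x : V, B x x = 0)
    (hnd : ∀ x : V, (∀ y : V, B x y = 0) → x = 0)
    (r s : Submodule (ZMod p) V)
    (hr2 : finrank (ZMod p) r = 2) (hs2 : finrank (ZMod p) s = 2)
    (hinf : r ⊓ s = ⊥) (hsup : r ⊔ s = ⊤)
    (horth : ∀ x ∈ r, ∀ y ∈ s, B x y = 0)
    (v : V) (hv : v ∉ (r : Set V) ∪ (s : Set V))
    (t : Submodule (ZMod p) V) (ht2 : finrank (ZMod p) t = 2) :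
    ∃ L : Submodule (ZMod p) V, finrank (ZMod p) L = 2 ∧
      (∀ x ∈ L, ∀ y ∈ L, B x y = 0) ∧ v ∈ L ∧ L ≠ t ∧ L ⊓ r = ⊥ ∧ L ⊓ s = ⊥ :=
  stmt_4_general halt hnd (.of_eq hinf hsup) horth hv t
end

section
/- Assume p ≥ 3 and that V = r ⊕ s, where r and s are 2-dimensional subspaces which are orthogonal to each other (B(x,y)=0 for all x ∈ r, y ∈ s). Let t be any 2-dimensional subspace of V. Then there exists a 2-dimensional totally isotropic subspace H of V with H ∩ r = {0}, H ∩ s = {0}, and H ∩ t = {0}. -/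
open Module

/-!
A totally isotropic plane meeting `r` and `s` trivially is the graph `{x + g x}` of an
anti-isometry `g : r → s`, given in coordinates by a `2 × 2` matrix `g` of prescribed determinant
`μ ≠ 0`. If `t` is spanned by the columns of the block matrix `(P; Q)`, then the graph meets `t`
trivially as soon as `det (Q - g P) ≠ 0`. On the matrices of determinant `μ` this is the affine
function `det Q + μ det P - tr (P adj(Q) g)` of `g`. Since these matrices affinely span the space
of all matrices, vanishing on all of them would force `P adj(Q) = 0` and `det Q + μ det P = 0`,
and then `P` and `Q` have a common kernel vector, contradicting `dim t = 2`.
-/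

section Matrices

open Matrix

theorem det_sub_mul_fin_two {R : Type*} [CommRing R] (P Q g : Matrix (Fin 2) (Fin 2) R) :
    (Q - g * P).det = Q.det + g.det * P.det - trace (P * Q.adjugate * g) := by
  simp only [det_fin_two, adjugate_fin_two, trace_fin_two, mul_apply, Matrix.sub_apply,
    Fin.sum_univ_two, of_apply, cons_val_zero, cons_val_one, cons_val_fin_one]
  ring

theorem eq_zero_of_trace_mul_eq_of_det_eq_fin_two {R : Type*} [CommRing R]
    {N : Matrix (Fin 2) (Fin 2) R} {μ k : R}
    (h : ∀ g : Matrix (Fin 2) (Fin 2) R, g.det = μ → trace (N * g) = k) : N = 0 := by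
  have htrace {a b c d : R} (hdet : a * d - b * c = μ) :
      N 0 0 * a + N 0 1 * c + (N 1 0 * b + N 1 1 * d) = k := by
    simpa [trace_fin_two, mul_apply, Fin.sum_univ_two] using
      h !![a, b; c, d] (by rw [det_fin_two_of, hdet])
  have hanti : N 0 1 * 1 + N 1 0 * -μ = k := by
    simpa using htrace (a := 0) (b := -μ) (c := 1) (d := 0) (by ring)
  have hdiag : N 0 0 * 1 + N 1 1 * μ = k := by
    simpa using htrace (a := 1) (b := 0) (c := 0) (d := μ) (by ring)
  ext i j
  fin_cases i <;> fin_cases j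
  · change N 0 0 = 0
    linear_combination htrace (a := 1) (b := -μ) (c := 1) (d := 0) (by ring) - hanti
  · change N 0 1 = 0
    linear_combination htrace (a := 1) (b := 0) (c := 1) (d := μ) (by ring) - hdiag
  · change N 1 0 = 0
    linear_combination htrace (a := 1) (b := 1) (c := 0) (d := μ) (by ring) - hdiag
  · change N 1 1 = 0
    linear_combination htrace (a := 0) (b := -μ) (c := 1) (d := 1) (by ring) - hanti

theorem eq_zero_of_mul_adjugate_eq_zero_fin_two {R : Type*} [CommRing R]
    {P Q : Matrix (Fin 2) (Fin 2) R} (hPQ : ∀ x, P *ᵥ x = 0 → Q *ᵥ x = 0 → x = 0)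
    (hP : P * Q.adjugate = 0) (hQ : Q.det = 0) : Q = 0 := by
  have hadj : Q.adjugate = 0 := by
    refine ext_of_mulVec_single fun i => ?_
    rw [zero_mulVec]
    apply hPQ
    · rw [mulVec_mulVec, hP, zero_mulVec]
    · rw [mulVec_mulVec, mul_adjugate, hQ, zero_smul, zero_mulVec]
  simpa [hadj] using (adjugate_adjugate' Q).symm

theorem exists_det_eq_and_det_sub_mul_ne_zero_fin_two {K : Type*} [Field K] {μ : K} (hμ : μ ≠ 0)
    {P Q : Matrix (Fin 2) (Fin 2) K} (hPQ : ∀ x, P *ᵥ x = 0 → Q *ᵥ x = 0 → x = 0) :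
    ∃ g : Matrix (Fin 2) (Fin 2) K, g.det = μ ∧ (Q - g * P).det ≠ 0 := by
  by_contra! hvanish
  have htrace (g : Matrix (Fin 2) (Fin 2) K) (hg : g.det = μ) :
      trace (P * Q.adjugate * g) = Q.det + μ * P.det := by
    rw [← hg, eq_comm, ← sub_eq_zero, ← det_sub_mul_fin_two, hvanish g hg]
  have hPadj : P * Q.adjugate = 0 := eq_zero_of_trace_mul_eq_of_det_eq_fin_two htrace
  have hdet : Q.det + μ * P.det = 0 := by
    simpa [hPadj] using (htrace !![1, 0; 0, μ] (by simp)).symm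
  have hQdet : Q.det = 0 := by
    by_contra hQ
    have hP : P = 0 := by
      simpa [Matrix.mul_assoc, adjugate_mul, hQ] using congrArg (· * Q) hPadj
    exact hQ (by simpa [hP] using hdet)
  have hPdet : P.det = 0 := by simpa [hQdet, hμ] using hdet
  obtain ⟨x, hx, hPx⟩ := exists_mulVec_eq_zero_iff.2 hPdet
  have hQ : Q = 0 := eq_zero_of_mul_adjugate_eq_zero_fin_two hPQ hPadj hQdet
  exact hx (hPQ x hPx (by rw [hQ, zero_mulVec]))

theorem toMatrix_mulVec_repr_eq_zero_iff {R M N ι κ : Type*} [CommRing R] [AddCommGroup M]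
    [Module R M] [AddCommGroup N] [Module R N] [Fintype ι] [DecidableEq ι] [Finite κ]
    (b : Basis ι R M) (c : Basis κ R N) (φ : M →ₗ[R] N) (v : M) :
    φ.toMatrix b c *ᵥ b.repr v = 0 ↔ φ v = 0 := by
  rw [LinearMap.toMatrix_mulVec_repr, ← Finsupp.coe_zero, DFunLike.coe_fn_eq,
    map_eq_zero_iff _ c.repr.injective]

end Matrices

section AlternatingForms

theorem isAlt_apply_eq_det_smul {R M N : Type*} [CommRing R] [AddCommGroup M] [Module R M]
    [AddCommGroup N] [Module R N] {B : M →ₗ[R] M →ₗ[R] N} (hB : B.IsAlt)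
    (b : Basis (Fin 2) R M) (x y : M) : B x y = b.det ![x, y] • B (b 0) (b 1) := by
  have hskew : B (b 1) (b 0) = -B (b 0) (b 1) := (hB.neg (b 0) (b 1)).symm
  conv_lhs => rw [← b.sum_repr x, ← b.sum_repr y]
  simp only [Fin.sum_univ_two, map_add, map_smul, LinearMap.add_apply, LinearMap.smul_apply,
    hB.self_eq_zero, hskew, Basis.det_apply, Matrix.det_fin_two, Basis.toMatrix_apply,
    Matrix.cons_val_zero, Matrix.cons_val_one]
  module

theorem isAlt_apply_toLin_eq_det_smul {R M M' N : Type*} [CommRing R] [AddCommGroup M] [Module R M]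
    [AddCommGroup M'] [Module R M'] [AddCommGroup N] [Module R N] {B : M' →ₗ[R] M' →ₗ[R] N}
    (hB : B.IsAlt) (b : Basis (Fin 2) R M) (b' : Basis (Fin 2) R M')
    (A : Matrix (Fin 2) (Fin 2) R) (x y : M) :
    B (A.toLin b b' x) (A.toLin b b' y) = b.det ![x, y] • A.det • B (b' 0) (b' 1) := by
  have hdet : b'.det ![A.toLin b b' (b 0), A.toLin b b' (b 1)] = A.det := by
    simp [Basis.det_apply, Matrix.det_fin_two, Basis.toMatrix_apply, Matrix.toLin_self]
  have hpull : (B.compl₁₂ (A.toLin b b') (A.toLin b b')).IsAlt := fun z => hB (A.toLin b b' z)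
  calc B (A.toLin b b' x) (A.toLin b b' y)
      = b.det ![x, y] • B (A.toLin b b' (b 0)) (A.toLin b b' (b 1)) :=
        isAlt_apply_eq_det_smul hpull b x y
    _ = b.det ![x, y] • A.det • B (b' 0) (b' 1) := by
        rw [isAlt_apply_eq_det_smul hB b' (A.toLin b b' (b 0)), hdet]

theorem separatingLeft_domRestrict₁₂_of_codisjoint {R M N : Type*} [CommRing R] [AddCommGroup M]
    [Module R M] [AddCommGroup N] [Module R N] {B : M →ₗ[R] M →ₗ[R] N} (hB : B.SeparatingLeft)
    {r s : Submodule R M} (hrs : Codisjoint r s) (horth : ∀ x ∈ r, ∀ y ∈ s, B x y = 0) :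
    (B.domRestrict₁₂ r r).SeparatingLeft := by
  intro x hx
  refine Subtype.ext (hB x fun v => ?_)
  obtain ⟨y, z, hy, hz, rfl⟩ := Submodule.codisjoint_iff_exists_add_eq.1 hrs v
  rw [map_add, horth x x.2 z hz, add_zero]
  exact hx ⟨y, hy⟩

theorem isAlt_apply_basis_ne_zero {R M N : Type*} [CommRing R] [Nontrivial R] [AddCommGroup M]
    [Module R M] [AddCommGroup N] [Module R N] {B : M →ₗ[R] M →ₗ[R] N} (halt : B.IsAlt)
    (hsep : B.SeparatingLeft) (b : Basis (Fin 2) R M) : B (b 0) (b 1) ≠ 0 := by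
  intro h
  refine b.ne_zero 0 (hsep _ fun y => ?_)
  rw [isAlt_apply_eq_det_smul halt b, h, smul_zero]

theorem exists_isometry_injective_sub_comp {K E F T : Type*} [Field K] [AddCommGroup E]
    [Module K E] [AddCommGroup F] [Module K F] [AddCommGroup T] [Module K T]
    {ω : E →ₗ[K] E →ₗ[K] K} {η : F →ₗ[K] F →ₗ[K] K}
    (hω : ω.IsAlt) (hωsep : ω.SeparatingLeft) (hη : η.IsAlt) (hηsep : η.SeparatingLeft)
    (hE : finrank K E = 2) (hF : finrank K F = 2) (hT : finrank K T = 2)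
    {α : T →ₗ[K] E} {β : T →ₗ[K] F} (hαβ : Disjoint (LinearMap.ker α) (LinearMap.ker β)) :
    ∃ g : E →ₗ[K] F, (∀ x y, η (g x) (g y) = ω x y) ∧ Function.Injective (β - g ∘ₗ α) := by
  have := finite_of_finrank_eq_succ hE
  have := finite_of_finrank_eq_succ hF
  have := finite_of_finrank_eq_succ hT
  let e := finBasisOfFinrankEq K E hE
  let f := finBasisOfFinrankEq K F hF
  let b := finBasisOfFinrankEq K T hT
  have hωe := isAlt_apply_basis_ne_zero hω hωsep e
  have hηf := isAlt_apply_basis_ne_zero hη hηsep f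
  have hker (x : Fin 2 → K) (hα : (α.toMatrix b e).mulVec x = 0)
      (hβ : (β.toMatrix b f).mulVec x = 0) : x = 0 := by
    obtain ⟨v, rfl⟩ := b.equivFun.surjective x
    have hv : v = 0 := Submodule.disjoint_def.1 hαβ v
      ((toMatrix_mulVec_repr_eq_zero_iff b e α v).1 hα)
      ((toMatrix_mulVec_repr_eq_zero_iff b f β v).1 hβ)
    rw [hv, map_zero]
  obtain ⟨M, hM, hdet⟩ := exists_det_eq_and_det_sub_mul_ne_zero_fin_two
    (div_ne_zero hωe hηf) hker
  refine ⟨M.toLin e f, fun x y => ?_, ?_⟩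
  · have hscale : M.det • η (f 0) (f 1) = ω (e 0) (e 1) := by
      rw [hM, smul_eq_mul, div_mul_cancel₀ _ hηf]
    rw [isAlt_apply_toLin_eq_det_smul hη, hscale, ← isAlt_apply_eq_det_smul hω]
  · have hunit : IsUnit ((β - M.toLin e f ∘ₗ α).toMatrix b f).det := by
      rwa [map_sub, LinearMap.toMatrix_comp b e f, LinearMap.toMatrix_toLin, isUnit_iff_ne_zero]
    exact (LinearEquiv.ofIsUnitDet hunit).injective

end AlternatingForms

section InternalGraph

variable {R M : Type*} [Ring R] [AddCommGroup M] [Module R M] {r s : Submodule R M}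

/-- The graph `{x + g x | x ∈ r}` of a linear map `g : r → s` between submodules of `M`, as a
submodule of `M` itself rather than of the product `r × s`. -/
def internalGraph (g : r →ₗ[R] s) : Submodule R M :=
  LinearMap.range (r.subtype + s.subtype ∘ₗ g)

theorem disjoint_internalGraph_right (h : Disjoint r s) (g : r →ₗ[R] s) :
    Disjoint (internalGraph g) s := by
  rw [Submodule.disjoint_def]
  rintro _ ⟨x, rfl⟩ hs
  have hx : (x : M) ∈ s := (s.add_mem_iff_left (g x).2).1 hs
  have : x = 0 := Subtype.ext (Submodule.disjoint_def.1 h x x.2 hx)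
  rw [this, map_zero]

theorem disjoint_internalGraph_left (h : Disjoint r s) {g : r →ₗ[R] s}
    (hg : Function.Injective g) : Disjoint (internalGraph g) r := by
  rw [Submodule.disjoint_def]
  rintro _ ⟨x, rfl⟩ hr
  have hgx : (g x : M) ∈ r := (r.add_mem_iff_right x.2).1 hr
  have : g x = 0 := Subtype.ext (Submodule.disjoint_def.1 h _ hgx (g x).2)
  rw [(map_eq_zero_iff g hg).1 this, map_zero]

theorem finrank_internalGraph (h : Disjoint r s) (g : r →ₗ[R] s) :
    finrank R (internalGraph g) = finrank R r := by
  refine LinearMap.finrank_range_of_inj ((injective_iff_map_eq_zero _).2 fun x hx => ?_)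
  have hxs : (x : M) ∈ s := by
    rw [show (x : M) = -g x from eq_neg_of_add_eq_zero_left hx]
    exact s.neg_mem (g x).2
  exact Subtype.ext (Submodule.disjoint_def.1 h x x.2 hxs)

theorem disjoint_internalGraph_of_injective (h : IsCompl r s) {g : r →ₗ[R] s} {t : Submodule R M}
    (hg : Function.Injective ((s.projectionOnto r h.symm).domRestrict t -
      g ∘ₗ (r.projectionOnto s h).domRestrict t)) :
    Disjoint (internalGraph g) t := by
  rw [Submodule.disjoint_def]
  rintro _ ⟨x, rfl⟩ ht
  refine congrArg Subtype.val (hg (a₁ := ⟨_, ht⟩) (a₂ := 0) ?_)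
  simp

end InternalGraph

theorem internalGraph_isotropic {R M N : Type*} [CommRing R] [AddCommGroup M] [Module R M]
    [AddCommGroup N] [Module R N] {B : M →ₗ[R] M →ₗ[R] N} {r s : Submodule R M}
    (hrs : ∀ x ∈ r, ∀ y ∈ s, B x y = 0) (hsr : ∀ x ∈ s, ∀ y ∈ r, B x y = 0) {g : r →ₗ[R] s}
    (hg : ∀ x y, B (g x) (g y) = -B x y) :
    ∀ v ∈ internalGraph g, ∀ w ∈ internalGraph g, B v w = 0 := by
  rintro _ ⟨x, rfl⟩ _ ⟨y, rfl⟩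
  simp [hrs _ x.2 _ (g y).2, hsr _ (g x).2 _ y.2, hg]

theorem stmt_5_general {K V : Type*} [Field K] [AddCommGroup V] [Module K V]
    {B : V →ₗ[K] V →ₗ[K] K} (halt : B.IsAlt) (hnd : B.SeparatingLeft) {r s : Submodule K V}
    (hr2 : finrank K r = 2) (hs2 : finrank K s = 2) (hrs : IsCompl r s)
    (horth : ∀ x ∈ r, ∀ y ∈ s, B x y = 0) {t : Submodule K V} (ht2 : finrank K t = 2) :
    ∃ H : Submodule K V, finrank K H = 2 ∧ (∀ x ∈ H, ∀ y ∈ H, B x y = 0) ∧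
      Disjoint H r ∧ Disjoint H s ∧ Disjoint H t := by
  have horth' : ∀ y ∈ s, ∀ x ∈ r, B y x = 0 := fun y hy x hx => halt.isRefl x y (horth x hx y hy)
  have hr := separatingLeft_domRestrict₁₂_of_codisjoint hnd hrs.codisjoint horth
  have hs := separatingLeft_domRestrict₁₂_of_codisjoint hnd hrs.symm.codisjoint horth'
  have hker : Disjoint (LinearMap.ker ((r.projectionOnto s hrs).domRestrict t))
      (LinearMap.ker ((s.projectionOnto r hrs.symm).domRestrict t)) := by
    refine Submodule.disjoint_def.2 fun x hxr hxs => Subtype.ext ?_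
    exact Submodule.disjoint_def.1 hrs.disjoint x
      ((Submodule.projectionOnto_apply_eq_zero_iff hrs.symm).1 hxs)
      ((Submodule.projectionOnto_apply_eq_zero_iff hrs).1 hxr)
  obtain ⟨g, hg, hinj⟩ := exists_isometry_injective_sub_comp (ω := -B.domRestrict₁₂ r r)
    (η := B.domRestrict₁₂ s s) (α := (r.projectionOnto s hrs).domRestrict t)
    (β := (s.projectionOnto r hrs.symm).domRestrict t) (fun x => neg_eq_zero.2 (halt x))
    (fun x hx => hr x (by simpa using hx)) (fun x => halt x) hs hr2 hs2 ht2 hker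
  have hginj : Function.Injective g :=
    (injective_iff_map_eq_zero g).2 fun x hx => hr x fun y => by simpa [hx] using hg x y
  exact ⟨internalGraph g, (finrank_internalGraph hrs.disjoint g).trans hr2,
    internalGraph_isotropic horth horth' hg, disjoint_internalGraph_left hrs.disjoint hginj,
    disjoint_internalGraph_right hrs.disjoint g,
    disjoint_internalGraph_of_injective hrs hinj⟩

/-- Let `p ≥ 3`, `V = r ⊕ s` with `r, s` 2-dimensional mutually orthogonal subspaces
of a 4-dimensional symplectic space over `F_p`, and let `t` be any 2-dimensional
subspace. Then there is a 2-dimensional totally isotropic subspace `H` with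
`H ∩ r = 0`, `H ∩ s = 0` and `H ∩ t = 0`. -/
theorem stmt_5 (p : ℕ) [Fact p.Prime] (hp3 : 3 ≤ p) (V : Type*) [AddCommGroup V]
    [Module (ZMod p) V] [FiniteDimensional (ZMod p) V]
    (hV : finrank (ZMod p) V = 4)
    (B : V →ₗ[ZMod p] V →ₗ[ZMod p] ZMod p)
    (halt : ∀ x : V, B x x = 0)
    (hnd : ∀ x : V, (∀ y : V, B x y = 0) → x = 0)
    (r s : Submodule (ZMod p) V)
    (hr2 : finrank (ZMod p) r = 2) (hs2 : finrank (ZMod p) s = 2)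
    (hinf : r ⊓ s = ⊥) (hsup : r ⊔ s = ⊤)
    (horth : ∀ x ∈ r, ∀ y ∈ s, B x y = 0)
    (t : Submodule (ZMod p) V) (ht2 : finrank (ZMod p) t = 2) :
    ∃ H : Submodule (ZMod p) V, finrank (ZMod p) H = 2 ∧
      (∀ x ∈ H, ∀ y ∈ H, B x y = 0) ∧ H ⊓ r = ⊥ ∧ H ⊓ s = ⊥ ∧ H ⊓ t = ⊥ := by
  simpa only [disjoint_iff] using stmt_5_general halt hnd hr2 hs2
    ⟨disjoint_iff.2 hinf, codisjoint_iff.2 hsup⟩ horth ht2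
end

section
/- If L1, L2, L3 are 2-dimensional subspaces of V which pairwise intersect in {0}, then the number of 2-dimensional subspaces W of V with W ∩ Li ≠ {0} for i = 1,2,3 is exactly 3. -/
open Module

/-!
Through a point `P` of the third subspace lying in the span of the first two there is exactly one
transversal, the intersection of the spans of `P` with each of the first two subspaces. The modular
law shows that this intersection is a line, and that it meets the third subspace in `P` only. Hence
transversals correspond to the points of the third subspace lying in the span of the first two.
-/

section ModularLattice

variable {α : Type*} [Lattice α]

/-- The transversal from `p` to `a` and `b`. In the lattice of subspaces of a vector space, when `p`
is a point of `a ⊔ b` outside the disjoint subspaces `a` and `b`, it is the unique line through `p`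
meeting both of them. -/
def transversal (a b p : α) : α := (p ⊔ a) ⊓ (p ⊔ b)

lemma transversal_comm (a b p : α) : transversal a b p = transversal b a p :=
  inf_comm ..

variable [IsModularLattice α]

lemma transversal_eq_sup (a b p : α) : transversal a b p = p ⊔ a ⊓ (p ⊔ b) :=
  sup_inf_assoc_of_le a le_sup_left

variable [OrderBot α] {a b c p : α}

lemma transversal_inf_eq_self (hac : Disjoint a c) (hpc : p ≤ c) : transversal a b p ⊓ c = p := by
  refine le_antisymm ?_ (le_inf (le_inf le_sup_left le_sup_left) hpc)
  calc transversal a b p ⊓ c ≤ (p ⊔ a) ⊓ c := inf_le_inf_right c inf_le_left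
    _ = p := by rw [sup_inf_assoc_of_le a hpc, hac.eq_bot, sup_bot_eq]

lemma isAtom_inf_sup (hab : Disjoint a b) (hp : IsAtom p) (hpb : Disjoint p b) (hle : p ≤ a ⊔ b) :
    IsAtom (a ⊓ (p ⊔ b)) := by
  have hsup : a ⊓ (p ⊔ b) ⊔ b = p ⊔ b := by
    rw [inf_comm, inf_sup_assoc_of_le a le_sup_right, inf_eq_left.2 (sup_le hle le_sup_right)]
  have hcov : b ⋖ a ⊓ (p ⊔ b) ⊔ b := by
    rw [hsup]
    exact covBy_sup_of_inf_covBy_left (hpb.eq_bot ▸ bot_covBy_iff.2 hp)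
  have hinf : a ⊓ (p ⊔ b) ⊓ b = ⊥ := (hab.mono_left inf_le_left).eq_bot
  exact bot_covBy_iff.1 (hinf ▸ inf_covBy_of_covBy_sup_right hcov)

lemma transversal_inf_left_ne_bot (hab : Disjoint a b) (hp : IsAtom p) (hpb : Disjoint p b)
    (hle : p ≤ a ⊔ b) : transversal a b p ⊓ a ≠ ⊥ := by
  refine ne_bot_of_le_ne_bot (isAtom_inf_sup hab hp hpb hle).ne_bot (le_inf ?_ inf_le_left)
  exact transversal_eq_sup a b p ▸ le_sup_right

lemma transversal_inf_right_ne_bot (hab : Disjoint a b) (hp : IsAtom p) (hpa : Disjoint p a)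
    (hle : p ≤ a ⊔ b) : transversal a b p ⊓ b ≠ ⊥ :=
  transversal_comm a b p ▸ transversal_inf_left_ne_bot hab.symm hp hpa (sup_comm a b ▸ hle)

end ModularLattice

section VectorSpace

variable {K V : Type*} [DivisionRing K] [AddCommGroup V] [Module K V]
  {L M N P W : Submodule K V}

lemma finrank_sup_eq_two_of_isAtom (hL : IsAtom L) (hM : IsAtom M) (hLM : Disjoint L M) :
    finrank K ↥(L ⊔ M) = 2 := by
  rw [Submodule.isAtom_iff_finrank_eq_one] at hL hM
  have := FiniteDimensional.of_finrank_pos (hL ▸ one_pos)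
  have := FiniteDimensional.of_finrank_pos (hM ▸ one_pos)
  have hsum := Submodule.finrank_sup_add_finrank_inf_eq L M
  rwa [hLM.eq_bot, finrank_bot, add_zero, hL, hM] at hsum

lemma isAtom_inf_of_finrank_eq_two (hW : finrank K W = 2) (hLM : Disjoint L M)
    (hWL : W ⊓ L ≠ ⊥) (hWM : W ⊓ M ≠ ⊥) : IsAtom (W ⊓ L) := by
  have := FiniteDimensional.of_finrank_pos (hW ▸ two_pos)
  have hsum := Submodule.finrank_sup_add_finrank_inf_eq (W ⊓ L) (W ⊓ M)
  rw [(hLM.mono inf_le_right inf_le_right).eq_bot, finrank_bot] at hsum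
  have hle : finrank K ↥(W ⊓ L ⊔ W ⊓ M) ≤ 2 :=
    hW ▸ Submodule.finrank_mono (sup_le inf_le_left inf_le_left)
  have hL := Submodule.one_le_finrank_iff.2 hWL
  have hM := Submodule.one_le_finrank_iff.2 hWM
  rw [Submodule.isAtom_iff_finrank_eq_one]
  lia

lemma inf_sup_inf_eq_of_finrank_eq_two (hW : finrank K W = 2) (hLM : Disjoint L M)
    (hWL : W ⊓ L ≠ ⊥) (hWM : W ⊓ M ≠ ⊥) : W ⊓ L ⊔ W ⊓ M = W := by
  have := FiniteDimensional.of_finrank_pos (hW ▸ two_pos)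
  refine Submodule.eq_of_le_of_finrank_eq (sup_le inf_le_left inf_le_left) ?_
  rw [hW, finrank_sup_eq_two_of_isAtom (isAtom_inf_of_finrank_eq_two hW hLM hWL hWM)
    (isAtom_inf_of_finrank_eq_two hW hLM.symm hWM hWL) (hLM.mono inf_le_right inf_le_right)]

lemma le_sup_of_finrank_eq_two (hW : finrank K W = 2) (hLM : Disjoint L M)
    (hWL : W ⊓ L ≠ ⊥) (hWM : W ⊓ M ≠ ⊥) : W ≤ L ⊔ M := by
  rw [← inf_sup_inf_eq_of_finrank_eq_two hW hLM hWL hWM]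
  exact sup_le_sup inf_le_right inf_le_right

lemma finrank_transversal (hLM : Disjoint L M) (hP : IsAtom P) (hPL : Disjoint P L)
    (hPM : Disjoint P M) (hle : P ≤ L ⊔ M) : finrank K ↥(transversal L M P) = 2 := by
  rw [transversal_eq_sup]
  exact finrank_sup_eq_two_of_isAtom hP (isAtom_inf_sup hLM hP hPM hle) (hPL.mono_right inf_le_left)

lemma transversal_inf_eq_of_finrank_eq_two (hW : finrank K W = 2) (hLM : Disjoint L M)
    (hLN : Disjoint L N) (hMN : Disjoint M N) (hWL : W ⊓ L ≠ ⊥) (hWM : W ⊓ M ≠ ⊥)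
    (hWN : W ⊓ N ≠ ⊥) :
    transversal L M (W ⊓ N) = W := by
  have hspan {L' : Submodule K V} (hLN' : Disjoint L' N) (hWL' : W ⊓ L' ≠ ⊥) :
      W ≤ W ⊓ N ⊔ L' :=
    calc W = W ⊓ N ⊔ W ⊓ L' :=
          (inf_sup_inf_eq_of_finrank_eq_two hW hLN'.symm hWN hWL').symm
      _ ≤ W ⊓ N ⊔ L' := sup_le_sup_left inf_le_right _
  have hfinrank : finrank K ↥(transversal L M (W ⊓ N)) = 2 :=
    finrank_transversal hLM (isAtom_inf_of_finrank_eq_two hW hLN.symm hWN hWL)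
      (hLN.symm.mono_left inf_le_right) (hMN.symm.mono_left inf_le_right)
      (inf_le_left.trans (le_sup_of_finrank_eq_two hW hLM hWL hWM))
  have hle : W ≤ transversal L M (W ⊓ N) := le_inf (hspan hLN hWL) (hspan hMN hWM)
  have := FiniteDimensional.of_finrank_pos (hfinrank ▸ two_pos)
  exact (Submodule.eq_of_le_of_finrank_eq hle (hW.trans hfinrank.symm)).symm

/-- Sends a point `P` of `L ⊔ M` lying on `N` to the line through `P` meeting `L` and `M`, and a
line meeting `L`, `M` and `N` to its intersection with `N`. -/
def pointEquivTransversal (hLM : Disjoint L M) (hLN : Disjoint L N) (hMN : Disjoint M N) :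
    {P : Submodule K V // P ≤ (L ⊔ M) ⊓ N ∧ IsAtom P} ≃
      {W : Submodule K V // finrank K W = 2 ∧ W ⊓ L ≠ ⊥ ∧ W ⊓ M ≠ ⊥ ∧ W ⊓ N ≠ ⊥} where
  toFun P := ⟨transversal L M P, by
    obtain ⟨P, hle, hP⟩ := P
    have ⟨hPLM, hPN⟩ := le_inf_iff.1 hle
    have hPL := (hLN.mono_right hPN).symm
    have hPM := (hMN.mono_right hPN).symm
    exact ⟨finrank_transversal hLM hP hPL hPM hPLM,
      transversal_inf_left_ne_bot hLM hP hPM hPLM, transversal_inf_right_ne_bot hLM hP hPL hPLM,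
      (transversal_inf_eq_self hLN hPN).symm ▸ hP.ne_bot⟩⟩
  invFun W := ⟨W ⊓ N, by
    obtain ⟨W, hW, hWL, hWM, hWN⟩ := W
    exact ⟨inf_le_inf_right N (le_sup_of_finrank_eq_two hW hLM hWL hWM),
      isAtom_inf_of_finrank_eq_two hW hLN.symm hWN hWL⟩⟩
  left_inv P := Subtype.ext (transversal_inf_eq_self hLN (P.2.1.trans inf_le_right))
  right_inv := fun ⟨_, hW, hWL, hWM, hWN⟩ ↦
    Subtype.ext (transversal_inf_eq_of_finrank_eq_two hW hLM hLN hMN hWL hWM hWN)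

/-- The points of the projective space of a subspace `L` of `V` are the atoms of the lattice of
subspaces of `V` that lie below `L`. -/
noncomputable def projectivizationEquivAtom (L : Submodule K V) :
    Projectivization K L ≃ {P : Submodule K V // P ≤ L ∧ IsAtom P} :=
  (Projectivization.equivSubmodule K L).trans <|
    (L.mapIic.toEquiv.subtypeEquiv fun P ↦ by
      rw [Submodule.isAtom_iff_finrank_eq_one]
      exact (Submodule.finrank_map_subtype_eq L P).symm ▸ Iff.rfl).trans <|
    Equiv.subtypeSubtypeEquivSubtypeInter (· ≤ L) IsAtom

theorem stmt_9_general (hLM : Disjoint L M) (hLN : Disjoint L N) (hMN : Disjoint M N) :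
    Nat.card {W : Submodule K V // finrank K W = 2 ∧ W ⊓ L ≠ ⊥ ∧ W ⊓ M ≠ ⊥ ∧ W ⊓ N ≠ ⊥} =
      Nat.card (Projectivization K ↥((L ⊔ M) ⊓ N)) :=
  Nat.card_congr <|
    ((projectivizationEquivAtom _).trans (pointEquivTransversal hLM hLN hMN)).symm

end VectorSpace

/-- In a 4-dimensional vector space over `F_2`, if `L1`, `L2`, `L3` are 2-dimensional
subspaces pairwise intersecting in `⊥`, the number of 2-dimensional subspaces meeting
all three nontrivially is exactly 3. -/
theorem stmt_9 (V : Type*) [AddCommGroup V] [Module (ZMod 2) V]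
    [FiniteDimensional (ZMod 2) V] (hV : finrank (ZMod 2) V = 4)
    (L1 L2 L3 : Submodule (ZMod 2) V)
    (hL1 : finrank (ZMod 2) L1 = 2) (hL2 : finrank (ZMod 2) L2 = 2)
    (hL3 : finrank (ZMod 2) L3 = 2)
    (h12 : L1 ⊓ L2 = ⊥) (h13 : L1 ⊓ L3 = ⊥) (h23 : L2 ⊓ L3 = ⊥) :
    Nat.card {W : Submodule (ZMod 2) V //
      finrank (ZMod 2) W = 2 ∧ W ⊓ L1 ≠ ⊥ ∧ W ⊓ L2 ≠ ⊥ ∧ W ⊓ L3 ≠ ⊥} = 3 := by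
  have htop : L1 ⊔ L2 = ⊤ :=
    Submodule.eq_top_of_disjoint L1 L2 (by rw [hV, hL1, hL2]) (disjoint_iff.2 h12)
  rw [stmt_9_general (disjoint_iff.2 h12) (disjoint_iff.2 h13) (disjoint_iff.2 h23), htop,
    top_inf_eq, Projectivization.card_of_finrank_two _ _ hL3, Nat.card_zmod]
end

section
/- If L1, L2, L3 are 2-dimensional subspaces of V which pairwise intersect in {0}, then there exist exactly 2 two-dimensional subspaces W of V with W ∩ Li = {0} for i = 1,2,3. -/
open Module

/-!
Two complementary subspaces `L₁`, `L₂` give coordinates in which the complements of `L₂` are the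
graphs of linear maps `L₁ → L₂`. A third subspace `L₃` complementary to both is the graph of an
isomorphism, and using it to identify `L₂` with `L₁` turns the triple into the horizontal axis, the
vertical axis and the diagonal of `L₁ × L₁`. A common complement of the three is then the graph of
an endomorphism `f` for which both `f` and `f - 1` are invertible. In dimension two over `𝔽₂` this
says that `f` has determinant and trace `1`, that is, characteristic polynomial `X² + X + 1`, and
there are exactly two such matrices.
-/

section Semiring

variable {R M N : Type*} [Semiring R] [AddCommMonoid M] [AddCommMonoid N] [Module R M] [Module R N]

theorem linearMap_graph_injective : Function.Injective (LinearMap.graph : (M →ₗ[R] N) → _) := by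
  intro f g hfg
  ext x
  have hx : (x, f x) ∈ g.graph := hfg ▸ (f.mem_graph_iff (x, f x)).mpr rfl
  exact hx

theorem isCompl_comap_linearEquiv_iff (e : M ≃ₗ[R] N) {p q : Submodule R N} :
    IsCompl (p.comap e.toLinearMap) (q.comap e.toLinearMap) ↔ IsCompl p q :=
  (Submodule.orderIsoMapComap e).symm.isCompl_iff.symm

end Semiring

section Graphs

variable {R M N : Type*} [Ring R] [AddCommGroup M] [AddCommGroup N] [Module R M] [Module R N]

theorem disjoint_graph_graph_iff {f g : M →ₗ[R] N} :
    Disjoint f.graph g.graph ↔ Function.Injective (f - g) := by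
  rw [Submodule.disjoint_def, injective_iff_map_eq_zero]
  constructor
  · intro hdisj x hx
    have hfg : f x = g x := sub_eq_zero.mp hx
    exact congrArg Prod.fst (hdisj (x, f x) rfl hfg)
  · rintro hinj ⟨x, y⟩ (rfl : y = f x) (hfg : f x = g x)
    obtain rfl : x = 0 := hinj x (sub_eq_zero.mpr hfg)
    rw [map_zero, Prod.mk_zero_zero]

theorem codisjoint_graph_graph_iff {f g : M →ₗ[R] N} :
    Codisjoint f.graph g.graph ↔ Function.Surjective (f - g) := by
  rw [Submodule.codisjoint_iff_exists_add_eq]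
  constructor
  · intro hcodisj y
    obtain ⟨⟨x₁, y₁⟩, ⟨x₂, y₂⟩, (rfl : y₁ = f x₁), (rfl : y₂ = g x₂), hsum⟩ := hcodisj (0, y)
    obtain ⟨hx, hy⟩ : x₁ + x₂ = 0 ∧ f x₁ + g x₂ = y := Prod.mk_inj.mp hsum
    obtain rfl : x₂ = -x₁ := (neg_eq_of_add_eq_zero_right hx).symm
    exact ⟨x₁, by rw [LinearMap.sub_apply, ← hy, map_neg, sub_eq_add_neg]⟩
  · rintro hsurj ⟨x, y⟩
    obtain ⟨x₁, hx₁ : f x₁ - g x₁ = y - g x⟩ := hsurj (y - g x)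
    refine ⟨(x₁, f x₁), (x - x₁, g (x - x₁)), rfl, rfl, Prod.ext (add_sub_cancel x₁ x) ?_⟩
    change f x₁ + g (x - x₁) = y
    rw [map_sub, add_sub_left_comm, hx₁, add_sub_cancel]

theorem isCompl_graph_graph_iff {f g : M →ₗ[R] N} :
    IsCompl f.graph g.graph ↔ Function.Bijective (f - g) := by
  rw [isCompl_iff, disjoint_graph_graph_iff, codisjoint_graph_graph_iff, Function.Bijective]

theorem isCompl_graph_graph_iff_isUnit_sub {f g : End R M} :
    IsCompl f.graph g.graph ↔ IsUnit (f - g) :=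
  isCompl_graph_graph_iff.trans (End.isUnit_iff _).symm

theorem isCompl_graph_range_inr (f : M →ₗ[R] N) :
    IsCompl f.graph (LinearMap.range (LinearMap.inr R M N)) := by
  rw [isCompl_iff, Submodule.disjoint_def, Submodule.codisjoint_iff_exists_add_eq]
  constructor
  · rintro _ (hfy : _ = f _) ⟨y, rfl⟩
    obtain rfl : y = 0 := hfy.trans (map_zero f)
    exact map_zero _
  · rintro ⟨x, y⟩
    exact ⟨(x, f x), (0, y - f x), rfl, ⟨y - f x, rfl⟩,
      Prod.ext (add_zero x) (add_sub_cancel (f x) y)⟩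

theorem isCompl_range_inr_iff_exists_eq_graph {p : Submodule R (M × N)} :
    IsCompl p (LinearMap.range (LinearMap.inr R M N)) ↔ ∃ f : M →ₗ[R] N, p = f.graph := by
  refine ⟨fun h ↦ Submodule.exists_eq_graph ⟨?_, ?_⟩, ?_⟩
  · rw [← LinearMap.ker_fst] at h
    exact LinearMap.injective_domRestrict_iff.mpr h.disjoint
  · intro x
    obtain ⟨z, _, hz, ⟨y, rfl⟩, hsum⟩ :=
      Submodule.codisjoint_iff_exists_add_eq.mp h.codisjoint (x, 0)
    exact ⟨⟨z, hz⟩, (add_zero z.1).symm.trans (congrArg Prod.fst hsum)⟩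
  · rintro ⟨f, rfl⟩
    exact isCompl_graph_range_inr f

end Graphs

section CommonComplements

variable {R M V : Type*} [Ring R] [AddCommGroup M] [Module R M] [AddCommGroup V] [Module R V]
  {L₁ L₂ L₃ : Submodule R V}

/-- The common complements of the horizontal axis `graph 0`, the vertical axis `range inr` and the
diagonal `graph 1` of `M × M` correspond, via the graph, to the endomorphisms `f` of `M` such that
`f` and `f - 1` are invertible. -/
noncomputable def endEquivCommonComplAxesDiagonal :
    {f : End R M // IsUnit f ∧ IsUnit (f - 1)} ≃
      {p : Submodule R (M × M) // IsCompl p (LinearMap.graph (0 : End R M)) ∧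
        IsCompl p (LinearMap.range (LinearMap.inr R M M)) ∧
        IsCompl p (LinearMap.graph (1 : End R M))} :=
  Equiv.ofBijective
    (fun f ↦ ⟨f.1.graph, isCompl_graph_graph_iff_isUnit_sub.mpr ((sub_zero f.1).symm ▸ f.2.1),
      isCompl_graph_range_inr f.1, isCompl_graph_graph_iff_isUnit_sub.mpr f.2.2⟩)
    ⟨fun _ _ h ↦ Subtype.ext (linearMap_graph_injective (congrArg Subtype.val h)), by
      rintro ⟨p, h₀, hvert, h₁⟩
      obtain ⟨f, rfl⟩ := isCompl_range_inr_iff_exists_eq_graph.mp hvert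
      rw [isCompl_graph_graph_iff_isUnit_sub, sub_zero] at h₀
      exact ⟨⟨f, h₀, isCompl_graph_graph_iff_isUnit_sub.mp h₁⟩, rfl⟩⟩

theorem comap_prodEquivOfIsCompl_left (h₁₂ : IsCompl L₁ L₂) :
    L₁.comap (L₁.prodEquivOfIsCompl L₂ h₁₂).toLinearMap =
      LinearMap.graph (0 : L₁ →ₗ[R] L₂) := by
  ext z
  rw [Submodule.mem_comap, LinearEquiv.coe_coe,
    ← Submodule.prodEquivOfIsCompl_symm_apply_snd_eq_zero L₁ L₂ h₁₂, LinearEquiv.symm_apply_apply,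
    LinearMap.mem_graph_iff, LinearMap.zero_apply]

theorem comap_prodEquivOfIsCompl_right (h₁₂ : IsCompl L₁ L₂) :
    L₂.comap (L₁.prodEquivOfIsCompl L₂ h₁₂).toLinearMap =
      LinearMap.range (LinearMap.inr R L₁ L₂) := by
  ext z
  rw [Submodule.mem_comap, LinearEquiv.coe_coe,
    ← Submodule.prodEquivOfIsCompl_symm_apply_fst_eq_zero L₁ L₂ h₁₂, LinearEquiv.symm_apply_apply,
    ← LinearMap.ker_fst, LinearMap.mem_ker, LinearMap.fst_apply]

theorem exists_linearEquiv_comap_prodEquivOfIsCompl_eq_graph (h₁₂ : IsCompl L₁ L₂)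
    (h₁₃ : IsCompl L₁ L₃) (h₂₃ : IsCompl L₂ L₃) :
    ∃ g : L₁ ≃ₗ[R] L₂,
      L₃.comap (L₁.prodEquivOfIsCompl L₂ h₁₂).toLinearMap = g.toLinearMap.graph := by
  obtain ⟨g, hg⟩ : ∃ g : L₁ →ₗ[R] L₂,
      L₃.comap (L₁.prodEquivOfIsCompl L₂ h₁₂).toLinearMap = g.graph := by
    rw [← isCompl_range_inr_iff_exists_eq_graph, ← comap_prodEquivOfIsCompl_right h₁₂,
      isCompl_comap_linearEquiv_iff]
    exact h₂₃.symm
  have hbij : Function.Bijective g := by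
    rw [← sub_zero g, ← isCompl_graph_graph_iff, ← comap_prodEquivOfIsCompl_left h₁₂, ← hg,
      isCompl_comap_linearEquiv_iff]
    exact h₁₃.symm
  exact ⟨LinearEquiv.ofBijective g hbij, hg⟩

theorem exists_linearEquiv_comap_eq_axes_diagonal (h₁₂ : IsCompl L₁ L₂) (h₁₃ : IsCompl L₁ L₃)
    (h₂₃ : IsCompl L₂ L₃) :
    ∃ e : (L₁ × L₁) ≃ₗ[R] V,
      L₁.comap e.toLinearMap = LinearMap.graph (0 : End R L₁) ∧
      L₂.comap e.toLinearMap = LinearMap.range (LinearMap.inr R L₁ L₁) ∧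
      L₃.comap e.toLinearMap = LinearMap.graph (1 : End R L₁) := by
  obtain ⟨g, hg⟩ := exists_linearEquiv_comap_prodEquivOfIsCompl_eq_graph h₁₂ h₁₃ h₂₃
  let e : (L₁ × L₁) ≃ₗ[R] L₁ × L₂ := (LinearEquiv.refl R L₁).prodCongr g
  refine ⟨e.trans (L₁.prodEquivOfIsCompl L₂ h₁₂), ?_, ?_, ?_⟩
  · rw [LinearEquiv.coe_trans, Submodule.comap_comp, comap_prodEquivOfIsCompl_left]
    ext ⟨x, y⟩
    simp [e, LinearMap.mem_graph_iff]
  · rw [LinearEquiv.coe_trans, Submodule.comap_comp, comap_prodEquivOfIsCompl_right]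
    ext ⟨x, y⟩
    simp [e]
  · rw [LinearEquiv.coe_trans, Submodule.comap_comp, hg]
    ext ⟨x, y⟩
    simp [e, LinearMap.mem_graph_iff]

theorem nonempty_commonCompl_equiv_end (h₁₂ : IsCompl L₁ L₂) (h₁₃ : IsCompl L₁ L₃)
    (h₂₃ : IsCompl L₂ L₃) :
    Nonempty ({W : Submodule R V // IsCompl W L₁ ∧ IsCompl W L₂ ∧ IsCompl W L₃} ≃
      {f : End R L₁ // IsUnit f ∧ IsUnit (f - 1)}) := by
  obtain ⟨e, h₁, h₂, h₃⟩ := exists_linearEquiv_comap_eq_axes_diagonal h₁₂ h₁₃ h₂₃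
  refine ⟨.trans ?_ endEquivCommonComplAxesDiagonal.symm⟩
  refine (Submodule.orderIsoMapComap e).symm.toEquiv.subtypeEquiv fun W ↦ ?_
  change _ ↔ IsCompl (W.comap e.toLinearMap) _ ∧ IsCompl (W.comap e.toLinearMap) _ ∧
    IsCompl (W.comap e.toLinearMap) _
  simp only [← h₁, ← h₂, ← h₃, isCompl_comap_linearEquiv_iff]

end CommonComplements

theorem det_sub_one_fin_two {R : Type*} [CommRing R] (A : Matrix (Fin 2) (Fin 2) R) :
    (A - 1).det = A.det - A.trace + 1 := by
  rw [Matrix.det_fin_two, Matrix.det_fin_two, Matrix.trace_fin_two]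
  simp only [Matrix.sub_apply, Matrix.one_apply_eq, ne_eq, zero_ne_one, one_ne_zero,
    not_false_eq_true, Matrix.one_apply_ne, sub_zero]
  ring

theorem isUnit_and_isUnit_sub_one_iff_det_trace (A : Matrix (Fin 2) (Fin 2) (ZMod 2)) :
    IsUnit A ∧ IsUnit (A - 1) ↔ A.det = 1 ∧ A.trace = 1 := by
  rw [A.isUnit_iff_isUnit_det, (A - 1).isUnit_iff_isUnit_det, det_sub_one_fin_two]
  generalize A.det = d, A.trace = t
  revert d t
  decide

theorem card_matrix_fin_two_zmod_two_det_trace_eq_one :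
    Nat.card {A : Matrix (Fin 2) (Fin 2) (ZMod 2) // A.det = 1 ∧ A.trace = 1} = 2 := by
  simp only [Matrix.det_fin_two, Matrix.trace_fin_two]
  rw [Nat.card_eq_fintype_card]
  decide

theorem card_isUnit_and_isUnit_sub_one_of_finrank_eq_two {M : Type*} [AddCommGroup M]
    [Module (ZMod 2) M] (hM : finrank (ZMod 2) M = 2) :
    Nat.card {f : End (ZMod 2) M // IsUnit f ∧ IsUnit (f - 1)} = 2 := by
  have : Module.Finite (ZMod 2) M := finite_of_finrank_eq_succ hM
  let toMat := LinearMap.toMatrixAlgEquiv (finBasisOfFinrankEq (ZMod 2) M hM)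
  refine (Nat.card_congr (toMat.toEquiv.subtypeEquiv fun f ↦ ?_)).trans
    card_matrix_fin_two_zmod_two_det_trace_eq_one
  change _ ↔ (toMat f).det = 1 ∧ (toMat f).trace = 1
  rw [← isUnit_and_isUnit_sub_one_iff_det_trace, ← map_one toMat, ← map_sub,
    MulEquiv.isUnit_map, MulEquiv.isUnit_map]

theorem isCompl_iff_finrank_eq_and_inf_eq_bot {K V : Type*} [DivisionRing K] [AddCommGroup V]
    [Module K V] [FiniteDimensional K V] {W L : Submodule K V} {n : ℕ}
    (hn : n + finrank K L = finrank K V) :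
    IsCompl W L ↔ finrank K W = n ∧ W ⊓ L = ⊥ := by
  constructor
  · intro h
    have hadd := Submodule.finrank_add_eq_of_isCompl h
    exact ⟨by omega, h.inf_eq_bot⟩
  · rintro ⟨hW, h⟩
    exact (Submodule.isCompl_iff_disjoint W L (by omega)).mpr (disjoint_iff.mpr h)

/-- In a 4-dimensional vector space over `F_2`, if `L1`, `L2`, `L3` are 2-dimensional
subspaces pairwise intersecting in `⊥`, there exist exactly 2 two-dimensional subspaces
`W` with `W ⊓ Li = ⊥` for `i = 1, 2, 3`. -/
theorem stmt_10 (V : Type*) [AddCommGroup V] [Module (ZMod 2) V]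
    [FiniteDimensional (ZMod 2) V] (hV : finrank (ZMod 2) V = 4)
    (L1 L2 L3 : Submodule (ZMod 2) V)
    (hL1 : finrank (ZMod 2) L1 = 2) (hL2 : finrank (ZMod 2) L2 = 2)
    (hL3 : finrank (ZMod 2) L3 = 2)
    (h12 : L1 ⊓ L2 = ⊥) (h13 : L1 ⊓ L3 = ⊥) (h23 : L2 ⊓ L3 = ⊥) :
    Nat.card {W : Submodule (ZMod 2) V //
      finrank (ZMod 2) W = 2 ∧ W ⊓ L1 = ⊥ ∧ W ⊓ L2 = ⊥ ∧ W ⊓ L3 = ⊥} = 2 := by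
  have isCompl_iff_line {W L : Submodule (ZMod 2) V} (hL : finrank (ZMod 2) L = 2) :
      IsCompl W L ↔ finrank (ZMod 2) W = 2 ∧ W ⊓ L = ⊥ :=
    isCompl_iff_finrank_eq_and_inf_eq_bot (by omega)
  have isCommonCompl_iff (W : Submodule (ZMod 2) V) :
      (finrank (ZMod 2) W = 2 ∧ W ⊓ L1 = ⊥ ∧ W ⊓ L2 = ⊥ ∧ W ⊓ L3 = ⊥) ↔
        IsCompl W L1 ∧ IsCompl W L2 ∧ IsCompl W L3 := by
    rw [isCompl_iff_line hL1, isCompl_iff_line hL2, isCompl_iff_line hL3]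
    tauto
  obtain ⟨e⟩ := nonempty_commonCompl_equiv_end ((isCompl_iff_line hL2).mpr ⟨hL1, h12⟩)
    ((isCompl_iff_line hL3).mpr ⟨hL1, h13⟩) ((isCompl_iff_line hL3).mpr ⟨hL2, h23⟩)
  calc
    _ = Nat.card {f : End (ZMod 2) L1 // IsUnit f ∧ IsUnit (f - 1)} :=
      Nat.card_congr ((Equiv.subtypeEquivRight isCommonCompl_iff).trans e)
    _ = 2 := card_isUnit_and_isUnit_sub_one_of_finrank_eq_two hL1
end

section
/- If L1 and L2 are distinct 2-dimensional subspaces of V with L1 ∩ L2 ≠ {0}, then the number of 2-dimensional subspaces W of V with W ∩ L1 ≠ {0} and W ∩ L2 ≠ {0} (this count includes L1 and L2 themselves) is exactly 11. -/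
open Module

/-!
The point `P = L1 ⊓ L2` and the plane `E = L1 ⊔ L2` control the lines meeting both `L1` and `L2`:
a line avoiding `P` meets `L1` and `L2` in two different points and so lies in `E`, while in the
plane `E` any two lines meet. Over the field with `q` elements in dimension `n`, there are
`1 + q + ⋯ + q ^ (n - 2)` lines through `P` (the points of `V ⧸ P`), `1 + q + q ^ 2` lines in `E`
(the points of the dual of `E`), and `1 + q` lines with both properties (the points of `E ⧸ P`).
-/

section Incidence

variable {K V : Type*} [DivisionRing K] [AddCommGroup V] [Module K V] [FiniteDimensional K V]

lemma finrank_inf_lt_of_ne {L₁ L₂ : Submodule K V} (h : finrank K L₁ = finrank K L₂)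
    (hne : L₁ ≠ L₂) : finrank K ↥(L₁ ⊓ L₂) < finrank K L₁ := by
  refine Submodule.finrank_lt_finrank_of_lt (inf_le_left.lt_of_ne fun hinf ↦ hne ?_)
  exact Submodule.eq_of_le_of_finrank_eq (inf_eq_left.mp hinf) h

lemma inf_ne_bot_of_finrank_lt {W L E : Submodule K V} (hW : W ≤ E) (hL : L ≤ E)
    (h : finrank K E < finrank K W + finrank K L) : W ⊓ L ≠ ⊥ := by
  intro hbot
  have hsum := Submodule.finrank_sup_add_finrank_inf_eq W L
  have hle := Submodule.finrank_mono (sup_le hW hL)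
  rw [hbot, finrank_bot] at hsum
  lia

lemma le_sup_of_disjoint_inf {W L₁ L₂ : Submodule K V} (hW : finrank K W = 2)
    (h₁ : W ⊓ L₁ ≠ ⊥) (h₂ : W ⊓ L₂ ≠ ⊥) (hdisj : Disjoint W (L₁ ⊓ L₂)) : W ≤ L₁ ⊔ L₂ := by
  have hbot : W ⊓ L₁ ⊓ (W ⊓ L₂) = ⊥ := by rw [← inf_inf_distrib_left, hdisj.eq_bot]
  have hsum := Submodule.finrank_sup_add_finrank_inf_eq (W ⊓ L₁) (W ⊓ L₂)
  have hpos₁ := Submodule.one_le_finrank_iff.mpr h₁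
  have hpos₂ := Submodule.one_le_finrank_iff.mpr h₂
  rw [hbot, finrank_bot] at hsum
  have hspan : W ⊓ L₁ ⊔ W ⊓ L₂ = W :=
    Submodule.eq_of_le_of_finrank_le (sup_le inf_le_left inf_le_left) (by lia)
  exact hspan.ge.trans (sup_le_sup inf_le_right inf_le_right)

lemma meets_both_iff_inf_le_or_le_sup {W L₁ L₂ : Submodule K V} (hW : finrank K W = 2)
    (hL₁ : finrank K L₁ = 2) (hL₂ : finrank K L₂ = 2) (hP : finrank K ↥(L₁ ⊓ L₂) = 1) :
    W ⊓ L₁ ≠ ⊥ ∧ W ⊓ L₂ ≠ ⊥ ↔ L₁ ⊓ L₂ ≤ W ∨ W ≤ L₁ ⊔ L₂ := by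
  have hatom : IsAtom (L₁ ⊓ L₂) := Submodule.isAtom_iff_finrank_eq_one.mpr hP
  constructor
  · rintro ⟨h₁, h₂⟩
    by_cases hPW : L₁ ⊓ L₂ ≤ W
    · exact .inl hPW
    · exact .inr (le_sup_of_disjoint_inf hW h₁ h₂ (hatom.not_le_iff_disjoint.mp hPW).symm)
  · rintro (hPW | hWE)
    · exact ⟨ne_bot_of_le_ne_bot hatom.ne_bot (le_inf hPW inf_le_left),
        ne_bot_of_le_ne_bot hatom.ne_bot (le_inf hPW inf_le_right)⟩
    · have hsum := Submodule.finrank_sup_add_finrank_inf_eq L₁ L₂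
      exact ⟨inf_ne_bot_of_finrank_lt hWE le_sup_left (by lia),
        inf_ne_bot_of_finrank_lt hWE le_sup_right (by lia)⟩

end Incidence

lemma ncard_le_and_finrank_eq {R M : Type*} [Ring R] [AddCommGroup M] [Module R M]
    (E : Submodule R M) (k : ℕ) :
    {W : Submodule R M | W ≤ E ∧ finrank R W = k}.ncard =
      {W : Submodule R E | finrank R W = k}.ncard := by
  rw [← Set.ncard_image_of_injective _ (Submodule.map_injective_of_injective E.subtype_injective)]
  congr 1
  ext W
  constructor
  · rintro ⟨hWE, hW⟩
    have hmap : (W.submoduleOf E).map E.subtype = W := by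
      rw [Submodule.submoduleOf, Submodule.map_comap_subtype, inf_eq_right.mpr hWE]
    exact ⟨W.submoduleOf E, by rw [Set.mem_ofPred, ← E.finrank_map_subtype_eq, hmap, hW], hmap⟩
  · rintro ⟨W, hW, rfl⟩
    exact ⟨E.map_subtype_le W, (E.finrank_map_subtype_eq W).trans hW⟩

lemma finrank_comap_of_surjective {K V V' : Type*} [DivisionRing K] [AddCommGroup V] [Module K V]
    [FiniteDimensional K V] [AddCommGroup V'] [Module K V'] {f : V →ₗ[K] V'}
    (hf : Function.Surjective f) (Q : Submodule K V') :
    finrank K (Q.comap f) = finrank K Q + finrank K f.ker := by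
  have hrange : (f.domRestrict (Q.comap f)).range = Q := by
    rw [LinearMap.range_domRestrict, Submodule.map_comap_eq_of_surjective hf]
  have hker : finrank K (f.domRestrict (Q.comap f)).ker = finrank K f.ker := by
    rw [LinearMap.ker_domRestrict]
    exact (Submodule.submoduleOfEquivOfLe (LinearMap.ker_le_comap f)).finrank_eq
  rw [← (f.domRestrict (Q.comap f)).finrank_range_add_finrank_ker, hrange, hker]

lemma finrank_comap_mkQ_s11 {K V : Type*} [DivisionRing K] [AddCommGroup V] [Module K V]
    [FiniteDimensional K V] (P : Submodule K V) (Q : Submodule K (V ⧸ P)) :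
    finrank K (Q.comap P.mkQ) = finrank K Q + finrank K P := by
  rw [finrank_comap_of_surjective P.mkQ_surjective, P.ker_mkQ]

lemma ncard_finrank_eq_ncard_dual {K V : Type*} [Field K] [AddCommGroup V] [Module K V]
    [FiniteDimensional K V] {k l : ℕ} (h : k + l = finrank K V) :
    {W : Submodule K V | finrank K W = k}.ncard =
      {Φ : Submodule K (Dual K V) | finrank K Φ = l}.ncard := by
  have hinj : Function.Injective (Submodule.dualAnnihilator (R := K) (M := V)) :=
    fun _ _ ↦ Subspace.dualAnnihilator_inj.mp
  rw [← Set.ncard_image_of_injective _ hinj]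
  congr 1
  ext Φ
  constructor
  · rintro ⟨W, hW, rfl⟩
    have hadd := Subspace.finrank_add_finrank_dualAnnihilator_eq W
    rw [Set.mem_ofPred] at hW ⊢
    lia
  · intro hΦ
    have hadd := Subspace.finrank_add_finrank_dualCoannihilator_eq Φ
    rw [Set.mem_ofPred] at hΦ
    refine ⟨Φ.dualCoannihilator, ?_, Subspace.dualCoannihilator_dualAnnihilator_eq⟩
    rw [Set.mem_ofPred]
    lia

lemma ncard_ge_and_le_and_finrank_eq_add {K V : Type*} [DivisionRing K] [AddCommGroup V]
    [Module K V] [FiniteDimensional K V] {P E : Submodule K V} (hPE : P ≤ E) (k : ℕ) :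
    {W : Submodule K V | P ≤ W ∧ W ≤ E ∧ finrank K W = finrank K P + k}.ncard =
      {Q : Submodule K (V ⧸ P) | Q ≤ E.map P.mkQ ∧ finrank K Q = k}.ncard := by
  have hcomap {W : Submodule K V} (hPW : P ≤ W) : (W.map P.mkQ).comap P.mkQ = W := by
    rw [Submodule.comap_map_mkQ, sup_eq_right.mpr hPW]
  rw [← Set.ncard_image_of_injective _ (Submodule.comap_injective_of_surjective P.mkQ_surjective)]
  congr 1
  ext W
  constructor
  · rintro ⟨hPW, hWE, hW⟩
    have hadd := finrank_comap_mkQ_s11 P (W.map P.mkQ)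
    rw [hcomap hPW] at hadd
    exact ⟨W.map P.mkQ, ⟨Submodule.map_mono hWE, by lia⟩, hcomap hPW⟩
  · rintro ⟨Q, ⟨hQE, hQ⟩, rfl⟩
    exact ⟨P.le_comap_mkQ Q, (Submodule.comap_mono hQE).trans_eq (hcomap hPE),
      by rw [finrank_comap_mkQ_s11, hQ, add_comm]⟩

section Counting

variable {K V : Type*} [Field K] [Finite K] [AddCommGroup V] [Module K V]

lemma ncard_finrank_eq_one :
    {P : Submodule K V | finrank K P = 1}.ncard =
      ∑ i ∈ Finset.range (finrank K V), Nat.card K ^ i :=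
  (Nat.card_congr (Projectivization.equivSubmodule K V)).symm.trans
    (Projectivization.card_of_finrank K V rfl)

variable [FiniteDimensional K V]

lemma ncard_le_and_finrank_eq_of_add_one_eq {E : Submodule K V} {k : ℕ}
    (h : k + 1 = finrank K E) :
    {H : Submodule K V | H ≤ E ∧ finrank K H = k}.ncard =
      ∑ i ∈ Finset.range (finrank K E), Nat.card K ^ i := by
  rw [ncard_le_and_finrank_eq, ncard_finrank_eq_ncard_dual h, ncard_finrank_eq_one,
    Subspace.dual_finrank_eq]

lemma ncard_ge_and_le_and_finrank_eq_add_one {P E : Submodule K V} (hPE : P ≤ E) :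
    {W : Submodule K V | P ≤ W ∧ W ≤ E ∧ finrank K W = finrank K P + 1}.ncard =
      ∑ i ∈ Finset.range (finrank K E - finrank K P), Nat.card K ^ i := by
  have hE : finrank K (E.map P.mkQ) = finrank K E - finrank K P := by
    have hadd := finrank_comap_mkQ_s11 P (E.map P.mkQ)
    rw [Submodule.comap_map_mkQ, sup_eq_right.mpr hPE] at hadd
    lia
  rw [ncard_ge_and_le_and_finrank_eq_add hPE, ncard_le_and_finrank_eq, ncard_finrank_eq_one, hE]

lemma ncard_ge_or_le_of_finrank_eq_add_two {P E : Submodule K V} (hPE : P ≤ E)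
    (hE : finrank K E = finrank K P + 2) :
    {W : Submodule K V | finrank K W = finrank K P + 1 ∧ (P ≤ W ∨ W ≤ E)}.ncard =
      ∑ i ∈ Finset.range (finrank K V - finrank K P), Nat.card K ^ i +
        ∑ i ∈ Finset.Ico 2 (finrank K E), Nat.card K ^ i := by
  let above : Set (Submodule K V) := {W | P ≤ W ∧ finrank K W = finrank K P + 1}
  let below : Set (Submodule K V) := {W | W ≤ E ∧ finrank K W = finrank K P + 1}
  have habove : above.ncard =
      ∑ i ∈ Finset.range (finrank K V - finrank K P), Nat.card K ^ i := by
    simpa only [le_top, true_and, finrank_top] using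
      ncard_ge_and_le_and_finrank_eq_add_one (le_top : P ≤ ⊤)
  have hbelow : below.ncard = ∑ i ∈ Finset.range (finrank K E), Nat.card K ^ i :=
    ncard_le_and_finrank_eq_of_add_one_eq hE.symm
  have hinter : above ∩ below =
      {W | P ≤ W ∧ W ≤ E ∧ finrank K W = finrank K P + 1} := by
    ext W
    simp only [above, below, Set.mem_inter_iff, Set.mem_ofPred]
    tauto
  have hunion : {W : Submodule K V | finrank K W = finrank K P + 1 ∧ (P ≤ W ∨ W ≤ E)} =
      above ∪ below := by
    ext W
    exact and_comm.trans or_and_right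
  have : Finite V := Module.finite_of_finite K
  have hcount := Set.ncard_union_add_ncard_inter above below
  have hsplit := Finset.sum_range_add_sum_Ico (fun i ↦ Nat.card K ^ i) (hE.ge.trans' le_add_self)
  rw [hinter, ncard_ge_and_le_and_finrank_eq_add_one hPE, Nat.sub_eq_of_eq_add' hE, habove,
    hbelow, ← hsplit] at hcount
  rw [hunion]
  lia

end Counting

theorem stmt_11_general {K V : Type*} [Field K] [Finite K] [AddCommGroup V] [Module K V]
    [FiniteDimensional K V] {L1 L2 : Submodule K V}
    (hL1 : finrank K L1 = 2) (hL2 : finrank K L2 = 2) (hne : L1 ≠ L2) (h12 : L1 ⊓ L2 ≠ ⊥) :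
    Nat.card {W : Submodule K V // finrank K W = 2 ∧ W ⊓ L1 ≠ ⊥ ∧ W ⊓ L2 ≠ ⊥} =
      ∑ i ∈ Finset.range (finrank K V - 1), Nat.card K ^ i + Nat.card K ^ 2 := by
  have hP : finrank K ↥(L1 ⊓ L2) = 1 := by
    have hlt := finrank_inf_lt_of_ne (hL1.trans hL2.symm) hne
    have hpos := Submodule.one_le_finrank_iff.mpr h12
    lia
  have hE : finrank K ↥(L1 ⊔ L2) = 3 := by
    have hsum := Submodule.finrank_sup_add_finrank_inf_eq L1 L2
    lia
  have hcount := ncard_ge_or_le_of_finrank_eq_add_two (inf_le_sup : L1 ⊓ L2 ≤ L1 ⊔ L2)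
    (by rw [hE, hP])
  rw [hP, hE, Nat.Ico_succ_singleton, Finset.sum_singleton] at hcount
  rw [← hcount]
  exact Nat.card_congr (Equiv.subtypeEquivRight fun W ↦ and_congr_right fun hW ↦
    meets_both_iff_inf_le_or_le_sup hW hL1 hL2 hP)

/-- In a 4-dimensional vector space over `F_2`, if `L1 ≠ L2` are 2-dimensional
subspaces with `L1 ⊓ L2 ≠ ⊥`, the number of 2-dimensional subspaces meeting both
nontrivially (including `L1` and `L2`) is exactly 11. -/
theorem stmt_11 (V : Type*) [AddCommGroup V] [Module (ZMod 2) V]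
    [FiniteDimensional (ZMod 2) V] (hV : finrank (ZMod 2) V = 4)
    (L1 L2 : Submodule (ZMod 2) V)
    (hL1 : finrank (ZMod 2) L1 = 2) (hL2 : finrank (ZMod 2) L2 = 2)
    (hne : L1 ≠ L2) (h12 : L1 ⊓ L2 ≠ ⊥) :
    Nat.card {W : Submodule (ZMod 2) V //
      finrank (ZMod 2) W = 2 ∧ W ⊓ L1 ≠ ⊥ ∧ W ⊓ L2 ≠ ⊥} = 11 := by
  rw [stmt_11_general hL1 hL2 hne h12, hV, Nat.card_zmod]
  rfl
end

section
/- Suppose V = r ⊕ s with r and s both 2-dimensional subspaces, and let v ∈ V be a vector with v ∉ r ∪ s. Then there exist exactly 2 two-dimensional subspaces W of V such that v ∈ W, W ∩ r = {0}, and W ∩ s = {0}. -/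
open Module

/-! Given `V = r ⊕ s`, the common complements of `r` and `s` are exactly the graphs of the linear
isomorphisms `r ≃ s`, and the graph of `φ` contains `a + b` iff `φ a = b`. So the subspaces to be
counted correspond to the isomorphisms taking the `r`-component of `v` to its `s`-component. Both
components are nonzero, hence these isomorphisms are in bijection with the stabilizer of a nonzero
vector in `GL(r)`, whose order over `𝔽_q` is `(q ^ n - q) ⋯ (q ^ n - q ^ (n - 1))` by
orbit-stabilizer. For `n = q = 2` this is `2`. -/

section CommonComplements

open Submodule

variable {R V : Type*} [Ring R] [AddCommGroup V] [Module R V] {r s W : Submodule R V}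

/-- The graph `{a + φ a | a ∈ r}` of a linear map `φ : r → s`, viewed inside `V = r ⊕ s`. It is
encoded as the kernel of `x ↦ x_s - φ x_r`, where `x_r` and `x_s` are the components of `x`. -/
noncomputable def complGraph (h : IsCompl r s) (φ : r →ₗ[R] s) : Submodule R V :=
  LinearMap.ker (s.projectionOnto r h.symm - φ ∘ₗ r.projectionOnto s h)

theorem mem_complGraph {h : IsCompl r s} {φ : r →ₗ[R] s} {x : V} :
    x ∈ complGraph h φ ↔ φ (r.projectionOnto s h x) = s.projectionOnto r h.symm x := by
  rw [complGraph, LinearMap.mem_ker, LinearMap.sub_apply, sub_eq_zero, eq_comm,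
    LinearMap.comp_apply]

theorem add_mem_complGraph {h : IsCompl r s} {φ : r →ₗ[R] s} {a : r} {b : s} :
    (a + b : V) ∈ complGraph h φ ↔ φ a = b := by
  simp [mem_complGraph]

theorem complGraph_injective (h : IsCompl r s) : Function.Injective (complGraph h) := by
  intro φ ψ hφψ
  ext1 a
  have ha : (a + φ a : V) ∈ complGraph h ψ := hφψ ▸ add_mem_complGraph.2 rfl
  exact (add_mem_complGraph.1 ha).symm

theorem isCompl_complGraph (h : IsCompl r s) (φ : r →ₗ[R] s) : IsCompl (complGraph h φ) s :=
  (LinearMap.isCompl_of_proj fun b ↦ by simp).symm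

theorem complGraph_symm (h : IsCompl r s) (φ : r ≃ₗ[R] s) :
    complGraph h.symm φ.symm.toLinearMap = complGraph h φ.toLinearMap := by
  ext x
  simp only [mem_complGraph, LinearEquiv.coe_coe]
  rw [LinearEquiv.symm_apply_eq, eq_comm]

theorem isCompl_complGraph_left (h : IsCompl r s) (φ : r ≃ₗ[R] s) :
    IsCompl (complGraph h φ.toLinearMap) r :=
  complGraph_symm h φ ▸ isCompl_complGraph h.symm φ.symm.toLinearMap

theorem exists_complGraph_eq (h : IsCompl r s) (hr : IsCompl W r) (hs : IsCompl W s) :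
    ∃ φ : r ≃ₗ[R] s, complGraph h φ.toLinearMap = W := by
  let fst : W ≃ₗ[R] r :=
    (quotientEquivOfIsCompl s W hs.symm).symm ≪≫ₗ quotientEquivOfIsCompl s r h.symm
  let snd : W ≃ₗ[R] s :=
    (quotientEquivOfIsCompl r W hr.symm).symm ≪≫ₗ quotientEquivOfIsCompl r s h
  let φ : r ≃ₗ[R] s := fst.symm ≪≫ₗ snd
  have le_graph : W ≤ complGraph h φ.toLinearMap := fun w hw ↦
    mem_complGraph.2 (congrArg snd (fst.symm_apply_apply ⟨w, hw⟩))
  have hφ := isCompl_complGraph h φ.toLinearMap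
  exact ⟨φ, (eq_of_le_of_inf_le_of_sup_le le_graph
    (hφ.inf_eq_bot.trans_le bot_le) (le_top.trans_eq hs.sup_eq_top.symm)).symm⟩

theorem natCard_common_compl_mem (h : IsCompl r s) (a : r) (b : s) :
    Nat.card {W : Submodule R V // (a + b : V) ∈ W ∧ IsCompl W r ∧ IsCompl W s} =
      Nat.card {φ : r ≃ₗ[R] s // φ a = b} := by
  let graph (φ : {φ : r ≃ₗ[R] s // φ a = b}) :
      {W : Submodule R V // (a + b : V) ∈ W ∧ IsCompl W r ∧ IsCompl W s} :=
    ⟨complGraph h φ.1.toLinearMap, add_mem_complGraph.2 φ.2, isCompl_complGraph_left h φ.1,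
      isCompl_complGraph h φ.1.toLinearMap⟩
  refine (Nat.card_eq_of_bijective graph ⟨fun φ ψ hφψ ↦ ?_, ?_⟩).symm
  · exact Subtype.ext (LinearEquiv.toLinearMap_injective
      (complGraph_injective h (congrArg Subtype.val hφψ)))
  · rintro ⟨W, hW, hr, hs⟩
    obtain ⟨φ, rfl⟩ := exists_complGraph_eq h hr hs
    exact ⟨⟨φ, add_mem_complGraph.1 hW⟩, rfl⟩

end CommonComplements

section DivisionRing

variable {K M : Type*} [DivisionRing K] [AddCommGroup M] [Module K M]

theorem isCompl_iff_finrank_add_eq_and_inf_eq_bot [FiniteDimensional K M] {p q : Submodule K M} :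
    IsCompl p q ↔ finrank K p + finrank K q = finrank K M ∧ p ⊓ q = ⊥ :=
  ⟨fun h ↦ ⟨Submodule.finrank_add_eq_of_isCompl h, h.inf_eq_bot⟩,
    fun ⟨hdim, hinf⟩ ↦ (Submodule.isCompl_iff_disjoint p q hdim.ge).2 (disjoint_iff.2 hinf)⟩

theorem exists_linearEquiv_self_apply_eq {a b : M} (ha : a ≠ 0) (hb : b ≠ 0) :
    ∃ g : M ≃ₗ[K] M, g a = b := by
  let onLines := LinearEquiv.coord K M a ha ≪≫ₗ LinearEquiv.toSpanNonzeroSingleton K M b hb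
  obtain ⟨g, hg⟩ := Submodule.exists_linearEquiv_restrict_eq onLines
  refine ⟨g, (hg ⟨a, Submodule.mem_span_singleton_self a⟩).symm.trans ?_⟩
  simp [onLines, LinearEquiv.coord_self]

theorem orbit_linearEquiv_self {a : M} (ha : a ≠ 0) :
    MulAction.orbit (M ≃ₗ[K] M) a = {0}ᶜ := by
  ext b
  refine ⟨?_, exists_linearEquiv_self_apply_eq ha⟩
  rintro ⟨g, rfl⟩
  exact g.map_ne_zero_iff.2 ha

end DivisionRing

section FiniteField

variable {K M N : Type*} [Field K] [Finite K]
  [AddCommGroup M] [Module K M] [FiniteDimensional K M]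

variable (K M) in
theorem natCard_linearEquiv_self :
    Nat.card (M ≃ₗ[K] M) =
      ∏ i ∈ Finset.range (finrank K M), (Nat.card K ^ finrank K M - Nat.card K ^ i) := by
  have := Fintype.ofFinite K
  rw [← Nat.card_congr ((Matrix.GeneralLinearGroup.toLin' (finBasis K M)).trans
    (LinearMap.GeneralLinearGroup.generalLinearEquiv K M)).toEquiv, Matrix.card_GL_field,
    Nat.card_eq_fintype_card, Finset.prod_range]

theorem natCard_stabilizer_linearEquiv_self {a : M} (ha : a ≠ 0) :
    Nat.card (MulAction.stabilizer (M ≃ₗ[K] M) a) =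
      ∏ i ∈ Finset.Ico 1 (finrank K M), (Nat.card K ^ finrank K M - Nat.card K ^ i) := by
  have : Finite M := Module.finite_of_finite K
  have : Nontrivial M := nontrivial_of_ne a 0 ha
  have finrank_pos : 0 < finrank K M := Module.finrank_pos
  have index_eq : (MulAction.stabilizer (M ≃ₗ[K] M) a).index = Nat.card K ^ finrank K M - 1 := by
    rw [MulAction.index_stabilizer, orbit_linearEquiv_self ha, Set.ncard_compl,
      Set.ncard_singleton, natCard_eq_pow_finrank (K := K)]
  have index_pos : 0 < Nat.card K ^ finrank K M - 1 :=
    Nat.sub_pos_of_lt (Nat.one_lt_pow finrank_pos.ne' Finite.one_lt_card)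
  have index_mul_card := (MulAction.stabilizer (M ≃ₗ[K] M) a).index_mul_card
  rw [index_eq, natCard_linearEquiv_self, Finset.prod_range_eq_mul_Ico _ finrank_pos,
    pow_zero] at index_mul_card
  exact Nat.eq_of_mul_eq_mul_left index_pos index_mul_card

theorem natCard_linearEquiv_apply_eq [AddCommGroup N] [Module K N] [FiniteDimensional K N]
    (hMN : finrank K M = finrank K N) {a : M} {b : N} (ha : a ≠ 0) (hb : b ≠ 0) :
    Nat.card {φ : M ≃ₗ[K] N // φ a = b} =
      ∏ i ∈ Finset.Ico 1 (finrank K M), (Nat.card K ^ finrank K M - Nat.card K ^ i) := by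
  let e : M ≃ₗ[K] N := LinearEquiv.ofFinrankEq M N hMN
  obtain ⟨g, hg⟩ := exists_linearEquiv_self_apply_eq (K := K) ha (e.symm.map_ne_zero_iff.2 hb)
  let ψ : M ≃ₗ[K] N := g ≪≫ₗ e
  have ψ_apply : ψ a = b := by simp [ψ, hg]
  have ψ_symm_apply : ψ.symm b = a := ψ.symm_apply_eq.2 ψ_apply.symm
  let toStabilizer : {φ : M ≃ₗ[K] N // φ a = b} ≃ MulAction.stabilizer (M ≃ₗ[K] M) a :=
    { toFun φ := ⟨φ.1 ≪≫ₗ ψ.symm, (congrArg ψ.symm φ.2).trans ψ_symm_apply⟩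
      invFun f := ⟨f.1 ≪≫ₗ ψ, (congrArg ψ f.2).trans ψ_apply⟩
      left_inv φ := by ext; simp
      right_inv f := by ext; simp }
  rw [Nat.card_congr toStabilizer, natCard_stabilizer_linearEquiv_self ha]

end FiniteField

theorem stmt_12_general (K V : Type*) [Field K] [Finite K] [AddCommGroup V] [Module K V]
    [FiniteDimensional K V] (n : ℕ) (r s : Submodule K V)
    (hr : finrank K r = n) (hs : finrank K s = n) (h : IsCompl r s)
    (v : V) (hv : v ∉ (r : Set V) ∪ (s : Set V)) :
    Nat.card {W : Submodule K V // v ∈ W ∧ finrank K W = n ∧ W ⊓ r = ⊥ ∧ W ⊓ s = ⊥} =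
      ∏ i ∈ Finset.Ico 1 n, (Nat.card K ^ n - Nat.card K ^ i) := by
  obtain ⟨⟨a, b⟩, rfl⟩ := (Submodule.prodEquivOfIsCompl r s h).surjective v
  simp only [Submodule.coe_prodEquivOfIsCompl'] at hv ⊢
  have ha : a ≠ 0 := by rintro rfl; simp at hv
  have hb : b ≠ 0 := by rintro rfl; simp at hv
  have finrank_add := Submodule.finrank_add_eq_of_isCompl h
  have common_compl_iff (W : Submodule K V) :
      (finrank K W = n ∧ W ⊓ r = ⊥ ∧ W ⊓ s = ⊥) ↔ IsCompl W r ∧ IsCompl W s := by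
    rw [isCompl_iff_finrank_add_eq_and_inf_eq_bot, isCompl_iff_finrank_add_eq_and_inf_eq_bot]
    lia
  simp only [common_compl_iff]
  rw [natCard_common_compl_mem h, natCard_linearEquiv_apply_eq (hr.trans hs.symm) ha hb, hr]

/-- In a 4-dimensional vector space over `F_2` with `V = r ⊕ s`, `r` and `s`
2-dimensional, and `v ∉ r ∪ s`, there exist exactly 2 two-dimensional subspaces `W`
with `v ∈ W`, `W ⊓ r = ⊥` and `W ⊓ s = ⊥`. -/
theorem stmt_12 (V : Type*) [AddCommGroup V] [Module (ZMod 2) V]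
    [FiniteDimensional (ZMod 2) V] (hV : finrank (ZMod 2) V = 4)
    (r s : Submodule (ZMod 2) V)
    (hr : finrank (ZMod 2) r = 2) (hs : finrank (ZMod 2) s = 2)
    (hinf : r ⊓ s = ⊥) (hsup : r ⊔ s = ⊤)
    (v : V) (hv : v ∉ (r : Set V) ∪ (s : Set V)) :
    Nat.card {W : Submodule (ZMod 2) V //
      v ∈ W ∧ finrank (ZMod 2) W = 2 ∧ W ⊓ r = ⊥ ∧ W ⊓ s = ⊥} = 2 := by
  simpa using stmt_12_general (ZMod 2) V 2 r s hr hs (IsCompl.of_eq hinf hsup) v hv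
end

section
/- Let λ ∈ ℂ with λ ≠ 1 and λ·Γ ⊆ Γ. Then the number of elements z of the quotient group ℂ/Γ satisfying λ·z = z (i.e., the number of cosets w + Γ with (λ−1)·w ∈ Γ) is finite and equal to |λ−1|^2, the complex norm of λ−1. -/
/-!
Multiplication by `λ - 1` is an `ℝ`-linear automorphism of `ℂ` that maps `Γ` into itself, and the
`λ`-fixed points of `ℂ ⧸ Γ` form the subgroup `(λ - 1)⁻¹Γ / Γ`. Applying `λ - 1` identifies its
order with the index of `(λ - 1)Γ` in `Γ`, which is the absolute value of the real determinant of
`λ - 1`, that is, the norm of `λ - 1` from `ℂ` to `ℝ`.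
-/

open Module

theorem ncard_cosets_map_mem_eq_relIndex {A B : Type*} [AddGroup A] [AddGroup B]
    (Γ : AddSubgroup A) [Γ.Normal] (Δ : AddSubgroup B) (e : A ≃+ B) :
    {z : A ⧸ Γ | ∃ w : A, (w : A ⧸ Γ) = z ∧ e w ∈ Δ}.ncard =
      (Γ.map (e : A →+ B)).relIndex Δ := by
  have coe_map_comap : {z : A ⧸ Γ | ∃ w : A, (w : A ⧸ Γ) = z ∧ e w ∈ Δ} =
      (Δ.comap (e : A →+ B)).map (QuotientAddGroup.mk' Γ) :=
    Set.ext fun _ ↦ exists_congr fun _ ↦ and_comm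
  calc {z : A ⧸ Γ | ∃ w : A, (w : A ⧸ Γ) = z ∧ e w ∈ Δ}.ncard
      = Nat.card ((Δ.comap (e : A →+ B)).map (QuotientAddGroup.mk' Γ)) := by
        rw [coe_map_comap, ← Nat.card_coe_set_eq]; rfl
    _ = Γ.relIndex (Δ.comap (e : A →+ B)) := by
        rw [← AddSubgroup.relIndex_ker, QuotientAddGroup.ker_mk']
    _ = (Γ.map (e : A →+ B)).relIndex Δ := by
        rw [← AddSubgroup.relIndex_map_map_of_injective _ _ (f := (e : A →+ B)) e.injective,
          AddSubgroup.map_comap_eq_self_of_surjective e.surjective]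

section Lattice

variable {R E ι : Type*} [CommRing R] [LinearOrder R] [IsStrictOrderedRing R]
  [AddCommGroup E] [Module R E]

theorem relIndex_closure_range_basis_eq_abs_det [Fintype ι] [DecidableEq ι] {b₁ b₂ : Basis ι R E}
    (h : AddSubgroup.closure (Set.range b₁) ≤ AddSubgroup.closure (Set.range b₂)) :
    ((AddSubgroup.closure (Set.range b₁)).relIndex (AddSubgroup.closure (Set.range b₂)) : R) =
      |b₂.det b₁| := by
  rw [AddSubgroup.relIndex_eq_natAbs_det _ _ h (b₁.addSubgroupOfClosure _ rfl)
    (b₂.addSubgroupOfClosure _ rfl), Nat.cast_natAbs, Int.cast_abs, Basis.det_apply,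
    Basis.det_apply, Int.cast_det]
  congr 2
  ext i j
  simp only [Matrix.map_apply, Basis.toMatrix_apply, Basis.addSubgroupOfClosure_apply]
  exact b₂.addSubgroupOfClosure_repr_apply _ rfl ⟨b₁ j, h (AddSubgroup.subset_closure ⟨j, rfl⟩)⟩ i

theorem relIndex_map_linearEquiv_eq_abs_det [Finite ι] (b : Basis ι R E) {Γ : AddSubgroup E}
    (hΓ : Γ = AddSubgroup.closure (Set.range b)) (f : E ≃ₗ[R] E) (hf : ∀ z ∈ Γ, f z ∈ Γ) :
    ((Γ.map (f : E →+ E)).relIndex Γ : R) = |LinearMap.det (f : E →ₗ[R] E)| := by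
  classical
  cases nonempty_fintype ι
  have map_closure : Γ.map (f : E →+ E) = AddSubgroup.closure (Set.range (b.map f)) := by
    rw [hΓ, AddMonoidHom.map_closure, ← Set.range_comp]
    rfl
  have map_le : Γ.map (f : E →+ E) ≤ Γ := AddSubgroup.map_le_iff_le_comap.mpr hf
  have det_map : b.det (b.map f) = LinearMap.det (f : E →ₗ[R] E) := by
    simpa [Basis.coe_map, b.det_self] using b.det_comp (f : E →ₗ[R] E) b
  rw [map_closure, hΓ] at map_le
  rw [map_closure, hΓ, relIndex_closure_range_basis_eq_abs_det map_le, det_map]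

end Lattice

theorem stmt_17_general {K E ι : Type*} [Field K] [LinearOrder K] [IsStrictOrderedRing K]
    [AddCommGroup E] [Module K E] [Finite ι] (b : Basis ι K E)
    (Γ : AddSubgroup E) (hΓ : Γ = AddSubgroup.closure (Set.range b))
    (T : E →ₗ[K] E) (hdet : LinearMap.det (T - 1) ≠ 0) (hT : ∀ z ∈ Γ, T z ∈ Γ) :
    {z : E ⧸ Γ | ∃ w : E, (w : E ⧸ Γ) = z ∧ (T - 1) w ∈ Γ}.Finite ∧
    ({z : E ⧸ Γ | ∃ w : E, (w : E ⧸ Γ) = z ∧ (T - 1) w ∈ Γ}.ncard : K)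
      = |LinearMap.det (T - 1)| := by
  have := b.finiteDimensional_of_finite
  let f : E ≃ₗ[K] E := (T - 1).equivOfDetNeZero hdet
  have ncard_eq : ({z : E ⧸ Γ | ∃ w : E, (w : E ⧸ Γ) = z ∧ (T - 1) w ∈ Γ}.ncard : K)
      = |LinearMap.det (T - 1)| :=
    (congrArg Nat.cast (ncard_cosets_map_mem_eq_relIndex Γ Γ f.toAddEquiv)).trans
      (relIndex_map_linearEquiv_eq_abs_det b hΓ f fun z hz ↦ Γ.sub_mem (hT z hz) hz)
  refine ⟨Set.finite_of_ncard_ne_zero fun ncard_zero ↦ hdet ?_, ncard_eq⟩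
  rwa [ncard_zero, Nat.cast_zero, eq_comm, abs_eq_zero] at ncard_eq

/-- Let `Γ ⊂ ℂ` be a lattice, `λ ≠ 1` with `λΓ ⊆ Γ`. The set of `λ`-fixed points of
`ℂ/Γ`, i.e. cosets `w + Γ` with `(λ−1)w ∈ Γ`, is finite of cardinality `|λ−1|²`. -/
theorem stmt_17 (ω1 ω2 : ℂ) (hind : LinearIndependent ℝ ![ω1, ω2])
    (Γ : AddSubgroup ℂ) (hΓ : Γ = AddSubgroup.closure {ω1, ω2})
    (lam : ℂ) (hlam : lam ≠ 1) (hmul : ∀ z ∈ Γ, lam * z ∈ Γ) :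
    {z : ℂ ⧸ Γ | ∃ w : ℂ, (w : ℂ ⧸ Γ) = z ∧ (lam - 1) * w ∈ Γ}.Finite ∧
    ({z : ℂ ⧸ Γ | ∃ w : ℂ, (w : ℂ ⧸ Γ) = z ∧ (lam - 1) * w ∈ Γ}.ncard : ℝ)
      = Complex.normSq (lam - 1) := by
  have lmul_sub_one : Algebra.lmul ℝ ℂ lam - 1 = Algebra.lmul ℝ ℂ (lam - 1) := by
    rw [map_sub, map_one]
  have det_eq : LinearMap.det (Algebra.lmul ℝ ℂ lam - 1) = Complex.normSq (lam - 1) := by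
    rw [lmul_sub_one, ← Algebra.norm_apply, Algebra.norm_complex_apply]
  have det_ne_zero : LinearMap.det (Algebra.lmul ℝ ℂ lam - 1) ≠ 0 := by
    rwa [det_eq, Complex.normSq_eq_zero.ne, sub_ne_zero]
  let b := basisOfLinearIndependentOfCardEqFinrank hind (by simp)
  have hb : Γ = AddSubgroup.closure (Set.range b) := by simpa [b, Set.pair_comm] using hΓ
  have fixed := stmt_17_general b Γ hb (Algebra.lmul ℝ ℂ lam) det_ne_zero hmul
  rwa [det_eq, abs_of_nonneg (Complex.normSq_nonneg _), lmul_sub_one] at fixed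
end

section
/- Assume that every μ ∈ ℂ with μ·Γ ⊆ Γ is an integer. Let V be a 1-dimensional complex linear subspace of ℂ × ℂ such that V ∩ (Γ × Γ) contains two elements that are linearly independent over ℝ. Then there exist coprime integers a, b such that V = ℂ·(a, b), the complex line spanned by the vector (a, b). -/
/-!
A line `V` in `K × K` other than `K · (0, 1)` is the graph of multiplication by some slope `l`.
The first projection embeds `V ∩ (Γ × Γ)` into `Γ`; if both have the same rank, the image contains
`r Γ` for some `r ≠ 0`, so `(r l) Γ ⊆ Γ`. As the only multipliers of `Γ` are the elements of the
base ring, `r l = s` is one of them, and `V = K · (r, s)`; it remains to cancel the greatest common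
divisor of `r` and `s`.
-/

open Module Submodule

section Rank

variable {R M : Type*} [AddCommGroup M]

theorem exists_ne_zero_forall_smul_mem_of_finrank_le [CommRing R] [IsDomain R] [Module R M]
    [Module.Finite R M] {N : Submodule R M} (h : finrank R M ≤ finrank R N) :
    ∃ r : R, r ≠ 0 ∧ ∀ x : M, r • x ∈ N := by
  have finrank_quotient : finrank R (M ⧸ N) = 0 := by
    have := finrank_quotient_add_finrank_le N
    lia
  obtain ⟨r, hr, hr₀⟩ :=
    annihilator_top_inter_nonZeroDivisors (finrank_eq_zero_iff_isTorsion.mp finrank_quotient)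
  refine ⟨r, nonZeroDivisors.ne_zero hr₀, fun x ↦ ?_⟩
  rw [← Quotient.mk_eq_zero, Quotient.mk_smul]
  exact mem_annihilator.mp hr _ mem_top

variable [Ring R] [Module R M]

theorem finrank_span_pair_le_two [StrongRankCondition R] (x y : M) :
    finrank R (span R {x, y}) ≤ 2 := by
  rw [← Matrix.range_cons_cons_empty x y ![]]
  exact (finrank_range_le_card ![x, y]).trans_eq (Fintype.card_fin 2)

theorem two_le_finrank_of_linearIndependent_pair [StrongRankCondition R] {N : Submodule R M}
    [Module.Finite R N] {u v : M} (hu : u ∈ N) (hv : v ∈ N) (h : LinearIndependent R ![u, v]) :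
    2 ≤ finrank R N := by
  have h_subtype : LinearIndependent R ![(⟨u, hu⟩ : N), ⟨v, hv⟩] := by
    refine .of_comp N.subtype ?_
    convert h
    ext i
    fin_cases i <;> rfl
  simpa using h_subtype.fintype_card_le_finrank

theorem finrank_span_pair_le_finrank_inf_prod [Nontrivial R] [IsNoetherianRing R] {x y : M}
    {N : Submodule R (M × M)} {u v : M × M} (hu : u ∈ N ⊓ (span R {x, y}).prod (span R {x, y}))
    (hv : v ∈ N ⊓ (span R {x, y}).prod (span R {x, y})) (huv : LinearIndependent R ![u, v]) :
    finrank R (span R {x, y}) ≤ finrank R ↥(N ⊓ (span R {x, y}).prod (span R {x, y})) := by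
  have span_fg : (span R {x, y}).FG := fg_span (Set.toFinite _)
  have : Module.Finite R ((span R {x, y}).prod (span R {x, y})) := .of_fg (span_fg.prod span_fg)
  have : Module.Finite R ↥(N ⊓ (span R {x, y}).prod (span R {x, y})) :=
    .of_fg (FG.of_le_of_isNoetherian inf_le_right)
  exact (finrank_span_pair_le_two x y).trans
    (two_le_finrank_of_linearIndependent_pair hu hv huv)

end Rank

section Line

variable {R K : Type*} [CommRing R] [Field K] [Algebra R K]

theorem eq_span_zero_one_or_exists_eq_span_one {V : Submodule K (K × K)} (hV : finrank K V = 1) :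
    V = span K {(0, 1)} ∨ ∃ l : K, V = span K {(1, l)} := by
  obtain ⟨⟨x, y⟩, rfl⟩ := (finrank_le_one_iff_isPrincipal V).mp hV.le
  obtain rfl | hx := eq_or_ne x 0
  · have hy : y ≠ 0 := by
      rintro rfl
      exact zero_ne_one (by rwa [← Prod.zero_eq_mk, span_zero_singleton, finrank_bot] at hV)
    left
    simpa using span_singleton_smul_eq hy.isUnit ((0, 1) : K × K)
  · refine .inr ⟨y / x, ?_⟩
    simpa [mul_div_cancel₀ y hx] using span_singleton_smul_eq hx.isUnit ((1, y / x) : K × K)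

theorem exists_ne_zero_forall_smul_mul_mem_of_finrank_le [IsDomain R] {Γ : Submodule R K}
    [Module.Finite R Γ] {l : K}
    (h : finrank R Γ ≤ finrank R ↥((span K {(1, l)}).restrictScalars R ⊓ Γ.prod Γ)) :
    ∃ r : R, r ≠ 0 ∧ ∀ x ∈ Γ, r • l * x ∈ Γ := by
  set P := (span K {((1, l) : K × K)}).restrictScalars R ⊓ Γ.prod Γ
  have snd_eq (p : P) : p.1.2 = l * p.1.1 := by
    obtain ⟨c, hc⟩ := mem_span_singleton.mp p.2.1
    simp [← hc, mul_comm]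
  let fst : P →ₗ[R] Γ := (LinearMap.fst R K K).restrict fun _ hp ↦ hp.2.1
  have fst_injective : Function.Injective fst := fun p q hpq ↦ by
    have hpq' : p.1.1 = q.1.1 := congrArg Subtype.val hpq
    exact Subtype.ext (Prod.ext hpq' (by rw [snd_eq, snd_eq, hpq']))
  rw [← LinearMap.finrank_range_of_inj fst_injective] at h
  obtain ⟨r, hr, hrΓ⟩ := exists_ne_zero_forall_smul_mem_of_finrank_le h
  refine ⟨r, hr, fun x hx ↦ ?_⟩
  obtain ⟨p, hp⟩ := hrΓ ⟨x, hx⟩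
  have fst_eq : p.1.1 = r • x := congrArg Subtype.val hp
  rw [smul_mul_assoc, ← mul_smul_comm, ← fst_eq, ← snd_eq]
  exact p.2.2.2

theorem exists_isCoprime_span_eq [IsDomain R] [IsBezout R] [FaithfulSMul R K] {r : R} (hr : r ≠ 0)
    (s : R) : ∃ a b : R, IsCoprime a b ∧
      span K {(algebraMap R K r, algebraMap R K s)} =
        span K {(algebraMap R K a, algebraMap R K b)} := by
  obtain ⟨a, ha⟩ := IsBezout.gcd_dvd_left r s
  obtain ⟨b, hb⟩ := IsBezout.gcd_dvd_right r s
  obtain ⟨x, y, hxy⟩ := IsBezout.gcd_eq_sum r s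
  generalize IsBezout.gcd r s = g at ha hb hxy
  subst ha hb
  have hg : g ≠ 0 := left_ne_zero_of_mul hr
  refine ⟨a, b, ⟨x, y, mul_left_cancel₀ hg (by linear_combination hxy)⟩, ?_⟩
  have hgK : IsUnit (algebraMap R K g) :=
    .mk0 _ ((FaithfulSMul.algebraMap_eq_zero_iff R K).not.mpr hg)
  simpa only [map_mul, Prod.smul_mk, smul_eq_mul] using
    span_singleton_smul_eq hgK (algebraMap R K a, algebraMap R K b)

theorem stmt_18_general [IsDomain R] [IsBezout R] [FaithfulSMul R K] (Γ : Submodule R K)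
    [Module.Finite R Γ]
    (hnoCM : ∀ μ : K, (∀ z ∈ Γ, μ * z ∈ Γ) → ∃ r : R, μ = algebraMap R K r)
    (V : Submodule K (K × K)) (hdim : finrank K V = 1)
    (hrank : finrank R Γ ≤ finrank R ↥(V.restrictScalars R ⊓ Γ.prod Γ)) :
    ∃ a b : R, IsCoprime a b ∧ V = span K {(algebraMap R K a, algebraMap R K b)} := by
  obtain rfl | ⟨l, rfl⟩ := eq_span_zero_one_or_exists_eq_span_one hdim
  · exact ⟨0, 1, isCoprime_one_right, by simp⟩
  obtain ⟨r, hr, hrl⟩ := exists_ne_zero_forall_smul_mul_mem_of_finrank_le hrank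
  obtain ⟨s, hs⟩ := hnoCM (r • l) hrl
  obtain ⟨a, b, hab, hspan⟩ := exists_isCoprime_span_eq (K := K) hr s
  have hrK : IsUnit (algebraMap R K r) :=
    .mk0 _ ((FaithfulSMul.algebraMap_eq_zero_iff R K).not.mpr hr)
  refine ⟨a, b, hab, ?_⟩
  calc
    span K {(1, l)} = span K {algebraMap R K r • (1, l)} := (span_singleton_smul_eq hrK _).symm
    _ = span K {(algebraMap R K r, algebraMap R K s)} := by simp [← hs, Algebra.smul_def]
    _ = _ := hspan

end Line

/-- Let `Γ ⊂ ℂ` be a lattice with no complex multiplication (every `μ` with `μΓ ⊆ Γ`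
is an integer). If `V ⊂ ℂ × ℂ` is a 1-dimensional complex subspace such that
`V ∩ (Γ × Γ)` contains two elements that are `ℝ`-linearly independent, then
`V = ℂ·(a, b)` for some coprime integers `a`, `b`. -/
theorem stmt_18 (ω1 ω2 : ℂ) (hind : LinearIndependent ℝ ![ω1, ω2])
    (Γ : AddSubgroup ℂ) (hΓ : Γ = AddSubgroup.closure {ω1, ω2})
    (hnoCM : ∀ μ : ℂ, (∀ z ∈ Γ, μ * z ∈ Γ) → ∃ n : ℤ, μ = (n : ℂ))
    (V : Submodule ℂ (ℂ × ℂ)) (hdim : Module.finrank ℂ V = 1)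
    (hmeet : ∃ u v : ℂ × ℂ, u ∈ V ∧ v ∈ V ∧ u.1 ∈ Γ ∧ u.2 ∈ Γ ∧ v.1 ∈ Γ ∧ v.2 ∈ Γ ∧
      LinearIndependent ℝ ![u, v]) :
    ∃ a b : ℤ, IsCoprime a b ∧ V = Submodule.span ℂ {(((a : ℂ), (b : ℂ)) : ℂ × ℂ)} := by
  obtain ⟨u, v, hu, hv, hu1, hu2, hv1, hv2, huv⟩ := hmeet
  obtain rfl : Γ = (span ℤ {ω1, ω2}).toAddSubgroup :=
    hΓ.trans (span_int_eq_addSubgroupClosure _).symm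
  have : Module.Finite ℤ (span ℤ {ω1, ω2}) := .span_of_finite ℤ (Set.toFinite _)
  exact stmt_18_general (span ℤ {ω1, ω2}) hnoCM V hdim <| finrank_span_pair_le_finrank_inf_prod
    ⟨hu, hu1, hu2⟩ ⟨hv, hv1, hv2⟩ (huv.restrict_scalars' ℤ)
end
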